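/- arXiv:2204.05540 — 4 statements merged into one kernel-verified Lean document; each statement's English description precedes it below -/
import Mathlib

section
/- The characteristic polynomial of the matrix M_q(n) equals ∏_{k=0}^{n} (x − ((n−k)_q − (k)_q))^{[n choose k]_q}; equivalently, the eigenvalues of M_q(n) are (n−k)_q − (k)_q with multiplicity [n choose k]_q, for k = 0, 1, …, n. -/
/-- The q-integer `(m)_q = 1 + q + ⋯ + q^(m-1)`, with `(0)_q = 0`. -/
def qInt (q m : ℕ) : ℕ := ∑ i ∈ Finset.range m, q ^ i

/-- The q-analog of the adjacency matrix of the n-cube: rows and columns indexed by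
subspaces of `F^n`; entry `(X, Y)` is `1` if `Y ⊆ X` with `dim Y = dim X - 1`,
`q^k` if `X ⊆ Y` with `dim X = k`, `dim Y = k + 1`, and `0` otherwise. -/
noncomputable def Mq (F : Type) [Field F] [Fintype F] (n : ℕ) :
    Matrix (Submodule F (Fin n → F)) (Submodule F (Fin n → F)) ℂ :=
  open Classical in
  fun X Y =>
    if Y ≤ X ∧ Module.finrank F Y + 1 = Module.finrank F X then 1
    else if X ≤ Y ∧ Module.finrank F Y = Module.finrank F X + 1 then
      (Fintype.card F : ℂ) ^ (Module.finrank F X)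
    else 0

/-- The Gaussian binomial coefficient `[n choose k]_q`, defined as the number of
`k`-dimensional subspaces of `F^n`, where `q` is the cardinality of `F`. -/
noncomputable def gaussBinom (F : Type) [Field F] [Fintype F] (n k : ℕ) : ℕ :=
  Nat.card {X : Submodule F (Fin n → F) // Module.finrank F X = k}

noncomputable instance (F : Type) [Field F] [Fintype F] (n : ℕ) :
    Fintype (Submodule F (Fin n → F)) := Fintype.ofFinite _

open Module

theorem qInt_mul_pred_card (q m : ℕ) (hq : 1 ≤ q) : qInt q m * (q - 1) = q ^ m - 1 := by
  unfold qInt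
  exact geom_sum_mul_of_one_le hq m

theorem qInt_add (q a b : ℕ) : qInt q (a + b) = qInt q a + q ^ a * qInt q b := by
  simp only [qInt, Finset.sum_range_add, pow_add, Finset.mul_sum]

section Counting

variable {F V : Type*} [Field F] [AddCommGroup V] [Module F V]

theorem Submodule.card_sdiff_eq [Fintype F] [Fintype V] {X Y : Submodule F V}
    [DecidablePred (· ∈ X)] [DecidablePred (· ∈ Y)] (h : X ≤ Y) :
    (Finset.univ.filter fun v : V => v ∈ Y ∧ v ∉ X).card =
      Fintype.card F ^ finrank F Y - Fintype.card F ^ finrank F X := by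
  classical
  rw [← Module.card_eq_pow_finrank (K := F) (V := X), ← Module.card_eq_pow_finrank (K := F) (V := Y),
    Fintype.card_subtype, Fintype.card_subtype, ← Finset.card_sdiff_of_subset]
  · congr 1; ext; simp
  · intro v; simpa using @h v

/-- The number of subspaces covering `X` inside an overspace `Z`. -/
theorem Submodule.natCard_covers_le [Fintype F] [Finite V] {X Z : Submodule F V} (h : X ≤ Z) :
    Nat.card {Y : Submodule F V // (X ≤ Y ∧ finrank F Y = finrank F X + 1) ∧ Y ≤ Z} =
      qInt (Fintype.card F) (finrank F Z - finrank F X) := by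
  classical
  have := Fintype.ofFinite V
  have := Fintype.ofFinite (Submodule F V)
  rw [Nat.card_eq_fintype_card, Fintype.card_subtype]
  set q := Fintype.card F
  have hq : 1 < q := Fintype.one_lt_card
  have key := Finset.card_eq_sum_card_fiberwise (f := fun v : V => X ⊔ F ∙ v)
    (s := Finset.univ.filter fun v : V => v ∈ Z ∧ v ∉ X)
    (t := Finset.univ.filter fun Y : Submodule F V =>
      (X ≤ Y ∧ finrank F Y = finrank F X + 1) ∧ Y ≤ Z) (by
      intro v hv
      simp only [Finset.coe_filter, Finset.mem_univ, true_and, Set.mem_ofPred_eq] at hv ⊢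
      exact ⟨⟨le_sup_left, finrank_sup_span_singleton hv.2⟩,
        sup_le h ((span_singleton_le_iff_mem _ _).2 hv.1)⟩)
  rw [Submodule.card_sdiff_eq h, Finset.sum_congr rfl (g := fun _ => q ^ finrank F X * (q - 1)),
    Finset.sum_const, smul_eq_mul] at key
  · obtain ⟨d, hd⟩ := Nat.exists_eq_add_of_le (Submodule.finrank_mono h)
    rw [hd, Nat.add_sub_cancel_left]
    rw [hd, pow_add, ← Nat.mul_sub_one, ← qInt_mul_pred_card q d hq.le,
      mul_left_comm _ (q ^ _)] at key
    have h1 : 0 < q ^ finrank F X := pow_pos (by omega) _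
    exact (Nat.eq_of_mul_eq_mul_right (by omega) (Nat.eq_of_mul_eq_mul_left h1 key)).symm
  · intro Y hY
    simp only [Finset.mem_filter, Finset.mem_univ, true_and] at hY
    obtain ⟨⟨hXY, hdim⟩, hYZ⟩ := hY
    have hc := Submodule.card_sdiff_eq hXY
    rw [hdim, pow_succ, ← Nat.mul_sub_one] at hc
    rw [← hc, Finset.filter_filter]
    congr 1
    ext v
    simp only [Finset.mem_filter, Finset.mem_univ, true_and]
    constructor
    · rintro ⟨⟨-, hvX⟩, rfl⟩
      exact ⟨le_sup_right (a := X) (mem_span_singleton_self v), hvX⟩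
    · rintro ⟨hvY, hvX⟩
      refine ⟨⟨hYZ hvY, hvX⟩, Submodule.eq_of_le_of_finrank_eq ?_ ?_⟩
      · exact sup_le hXY ((span_singleton_le_iff_mem _ _).2 hvY)
      · rw [finrank_sup_span_singleton hvX, hdim]

/-- The number of hyperplanes of `X`. -/
theorem Submodule.natCard_hyperplanes [Fintype F] [Finite V] (X : Submodule F V) :
    Nat.card {Y : Submodule F V // Y ≤ X ∧ finrank F Y + 1 = finrank F X} =
      qInt (Fintype.card F) (finrank F X) := by
  have : Finite (Dual F V) := Module.finite_of_finite F
  have hX := Subspace.finrank_add_finrank_dualAnnihilator_eq X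
  have key := Submodule.natCard_covers_le (le_top (a := X.dualAnnihilator))
  rw [finrank_top, Subspace.dual_finrank_eq, ← hX, Nat.add_sub_cancel] at key
  rw [← key]
  refine Nat.card_congr
    ((Subspace.orderIsoFiniteDimensional.toEquiv.trans OrderDual.ofDual).subtypeEquiv ?_)
  intro Y
  have hY := Subspace.finrank_add_finrank_dualAnnihilator_eq Y
  change _ ↔ (X.dualAnnihilator ≤ Y.dualAnnihilator ∧ finrank F Y.dualAnnihilator = _) ∧ _
  rw [Subspace.dualAnnihilator_le_dualAnnihilator_iff]
  simp only [le_top, and_true]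
  refine and_congr_right fun _ => ?_
  omega

theorem Submodule.hyperplane_le_iff [FiniteDimensional F V] {X Z : Submodule F V} (h : ¬ X ≤ Z)
    (Y : Submodule F V) :
    (Y ≤ X ∧ finrank F Y + 1 = finrank F X) ∧ Y ≤ Z ↔
      Y = X ⊓ Z ∧ finrank F ↥(X ⊓ Z) + 1 = finrank F X := by
  have hlt : finrank F ↥(X ⊓ Z) < finrank F X :=
    Submodule.finrank_lt_finrank_of_lt (inf_lt_left.2 h)
  constructor
  · rintro ⟨⟨h1, h2⟩, h3⟩
    have := Submodule.eq_of_le_of_finrank_le (le_inf h1 h3) (by omega)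
    exact ⟨this, this ▸ h2⟩
  · rintro ⟨rfl, h2⟩
    exact ⟨⟨inf_le_left, h2⟩, inf_le_right⟩

theorem Submodule.le_cover_iff [FiniteDimensional F V] {X Z : Submodule F V} (h : ¬ X ≤ Z)
    (Y : Submodule F V) :
    (Z ≤ Y ∧ finrank F Y = finrank F Z + 1) ∧ X ≤ Y ↔
      Y = X ⊔ Z ∧ finrank F ↥(X ⊓ Z) + 1 = finrank F X := by
  have hlt : finrank F Z < finrank F ↥(X ⊔ Z) :=
    Submodule.finrank_lt_finrank_of_lt (right_lt_sup.2 h)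
  have hmod := Submodule.finrank_sup_add_finrank_inf_eq X Z
  constructor
  · rintro ⟨⟨h1, h2⟩, h3⟩
    have := Submodule.eq_of_le_of_finrank_le (sup_le h3 h1) (by omega)
    exact ⟨this.symm, by rw [this] at hmod; omega⟩
  · rintro ⟨rfl, h2⟩
    exact ⟨⟨le_sup_right, by omega⟩, le_sup_left⟩

end Counting

section Triangular

variable {m R : Type*} [Fintype m] [DecidableEq m] [CommRing R]

/-- A matrix that is strictly upper triangular off the diagonal with respect to a grading of its
index set has determinant the product of its diagonal entries. -/
theorem Matrix.det_eq_prod_diag_of_grading (A : Matrix m m R) (b : m → ℕ)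
    (h : ∀ i j, i ≠ j → b j ≤ b i → A i j = 0) : A.det = ∏ i, A i i := by
  have hA : A.BlockTriangular b := fun i j hij => h i j (by rintro rfl; exact lt_irrefl _ hij) hij.le
  rw [hA.det, ← Finset.prod_fiberwise_of_maps_to (g := b) (t := Finset.univ.image b)
    (fun i _ => Finset.mem_image_of_mem _ (Finset.mem_univ i))]
  refine Finset.prod_congr rfl fun k _ => ?_
  have : A.toSquareBlock b k = Matrix.diagonal fun i : {a // b a = k} => A i i := by
    ext i j
    by_cases hij : i = j
    · simp [hij, Matrix.toSquareBlock_def]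
    · rw [Matrix.diagonal_apply_ne _ hij]
      exact h i j (fun e => hij (Subtype.ext e)) (j.2.trans i.2.symm).le
  rw [this, Matrix.det_diagonal]
  exact (Finset.prod_subtype (f := fun i => A i i) _ (by simp)).symm

theorem Matrix.charpoly_eq_of_mul_eq_mul {A T P : Matrix m m R} (hP : P.det = 1)
    (h : A * P = P * T) : A.charpoly = T.charpoly := by
  have hu : IsUnit P := (Matrix.isUnit_iff_isUnit_det P).2 (hP ▸ isUnit_one)
  obtain ⟨u, rfl⟩ := hu
  rw [← Matrix.charpoly_units_conj u T, ← h, ← Matrix.coe_units_inv, Units.mul_inv_cancel_right]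

end Triangular

section Intertwining

variable (F : Type) [Field F] [Fintype F] (n : ℕ)

open Classical in
/-- The incidence matrix of the containment order on subspaces. -/
noncomputable def containment : Matrix (Submodule F (Fin n → F)) (Submodule F (Fin n → F)) ℂ :=
  fun X Z => if X ≤ Z then 1 else 0

open Classical in
/-- The matrix of `Mq F n` in the basis of indicator functions of lower intervals. -/
noncomputable def triangularForm :
    Matrix (Submodule F (Fin n → F)) (Submodule F (Fin n → F)) ℂ :=
  Matrix.diagonal (fun Z : Submodule F (Fin n → F) => (qInt (Fintype.card F) (finrank F Z) : ℂ) -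
      qInt (Fintype.card F) (n - finrank F Z)) +
    Matrix.of fun Y Z : Submodule F (Fin n → F) =>
      if Z ≤ Y ∧ finrank F Y = finrank F Z + 1 then 1 else 0

variable {F n}

open Classical in
theorem Mq_mul_containment : Mq F n * containment F n = containment F n * triangularForm F n := by
  ext X Z
  set q := Fintype.card F
  have hL : (Mq F n * containment F n) X Z =
      (Nat.card {Y : Submodule F (Fin n → F) //
          (Y ≤ X ∧ finrank F Y + 1 = finrank F X) ∧ Y ≤ Z} : ℂ) +
      q ^ finrank F X *
        Nat.card {Y : Submodule F (Fin n → F) //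
          (X ≤ Y ∧ finrank F Y = finrank F X + 1) ∧ Y ≤ Z} := by
    simp only [Nat.card_eq_fintype_card, Fintype.card_subtype, Finset.card_filter, Nat.cast_sum,
      Finset.mul_sum, ← Finset.sum_add_distrib, Matrix.mul_apply]
    refine Finset.sum_congr rfl fun Y _ => ?_
    have hne : finrank F Y + 1 = finrank F X → finrank F Y ≠ finrank F X + 1 := by omega
    by_cases h1 : Y ≤ Z <;> by_cases h2 : Y ≤ X ∧ finrank F Y + 1 = finrank F X <;>
      simp [Mq, containment, h1, h2, hne, q]
  have hR : (containment F n * triangularForm F n) X Z =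
      (if X ≤ Z then (qInt q (finrank F Z) : ℂ) - qInt q (n - finrank F Z) else 0) +
      Nat.card {Y : Submodule F (Fin n → F) //
          (Z ≤ Y ∧ finrank F Y = finrank F Z + 1) ∧ X ≤ Y} := by
    rw [triangularForm, Matrix.mul_add, Matrix.add_apply, Matrix.mul_diagonal]
    congr 1
    · simp [containment, q]
    · simp only [Nat.card_eq_fintype_card, Fintype.card_subtype, Finset.card_filter, Nat.cast_sum,
        Matrix.mul_apply]
      refine Finset.sum_congr rfl fun Y _ => ?_
      by_cases h1 : X ≤ Y <;> simp [containment, h1]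
  rw [hL, hR]
  by_cases h : X ≤ Z
  · have e1 : Nat.card {Y : Submodule F (Fin n → F) //
        (Y ≤ X ∧ finrank F Y + 1 = finrank F X) ∧ Y ≤ Z} = qInt q (finrank F X) := by
      rw [← Submodule.natCard_hyperplanes]
      exact Nat.card_congr (Equiv.subtypeEquivRight fun Y => and_iff_left_of_imp fun hY => hY.1.trans h)
    have e2 : Nat.card {Y : Submodule F (Fin n → F) //
        (Z ≤ Y ∧ finrank F Y = finrank F Z + 1) ∧ X ≤ Y} = qInt q (n - finrank F Z) := by
      have := Submodule.natCard_covers_le (le_top (a := Z))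
      rw [finrank_top, finrank_fin_fun] at this
      rw [← this]
      exact Nat.card_congr (Equiv.subtypeEquivRight fun Y =>
        and_congr_right fun hY => ⟨fun _ => le_top, fun _ => h.trans hY.1⟩)
    obtain ⟨d, hd⟩ := Nat.exists_eq_add_of_le (Submodule.finrank_mono h)
    rw [e1, e2, Submodule.natCard_covers_le h, if_pos h, hd, Nat.add_sub_cancel_left, qInt_add]
    push_cast
    ring
  · have e : IsEmpty {Y : Submodule F (Fin n → F) //
        (X ≤ Y ∧ finrank F Y = finrank F X + 1) ∧ Y ≤ Z} :=
      ⟨fun Y => h (Y.2.1.1.trans Y.2.2)⟩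
    simp only [if_neg h, Nat.card_of_isEmpty (α := {Y : Submodule F (Fin n → F) //
      (X ≤ Y ∧ finrank F Y = finrank F X + 1) ∧ Y ≤ Z}),
      Submodule.hyperplane_le_iff h, Submodule.le_cover_iff h]
    by_cases hd : finrank F ↥(X ⊓ Z) + 1 = finrank F X <;> simp [hd]

theorem det_containment [DecidableEq (Submodule F (Fin n → F))] : (containment F n).det = 1 := by
  rw [Matrix.det_eq_prod_diag_of_grading _ (fun Z : Submodule F (Fin n → F) => finrank F Z)]
  · simp [containment]
  · intro X Z hne hle
    exact if_neg fun h => hne (Submodule.eq_of_le_of_finrank_le h hle)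

open Polynomial in
theorem charpoly_triangularForm [DecidableEq (Submodule F (Fin n → F))] :
    (triangularForm F n).charpoly =
      ∏ Z : Submodule F (Fin n → F), (X - C ((qInt (Fintype.card F) (finrank F Z) : ℂ) -
        qInt (Fintype.card F) (n - finrank F Z))) := by
  rw [← Matrix.charpoly_transpose, Matrix.charpoly,
    Matrix.det_eq_prod_diag_of_grading _ (fun Z : Submodule F (Fin n → F) => finrank F Z)]
  · refine Finset.prod_congr rfl fun Z _ => ?_
    simp [Matrix.charmatrix_apply_eq, triangularForm]
  · intro Y Z hne hle
    rw [Matrix.charmatrix_apply_ne _ _ _ hne, Matrix.transpose_apply]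
    have : finrank F Z ≠ finrank F Y + 1 := by omega
    simp [triangularForm, hne.symm, this]

/-- A dimension-reversing permutation of the subspaces of `F^n`. -/
theorem exists_perm_finrank_add_eq (F : Type) [Field F] (n : ℕ) :
    ∃ e : Equiv.Perm (Submodule F (Fin n → F)),
      ∀ Z : Submodule F (Fin n → F), finrank F Z + finrank F (e Z) = n := by
  have f : Dual F (Fin n → F) ≃ₗ[F] (Fin n → F) :=
    LinearEquiv.ofFinrankEq _ _ Subspace.dual_finrank_eq
  refine ⟨(Subspace.orderIsoFiniteDimensional.toEquiv.trans OrderDual.ofDual).trans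
    (Submodule.orderIsoMapComap f).toEquiv, fun Z => ?_⟩
  have h := Subspace.finrank_add_finrank_dualAnnihilator_eq Z
  rw [finrank_fin_fun] at h
  rw [← LinearEquiv.finrank_map_eq f Z.dualAnnihilator] at h
  exact h

theorem prod_finrank_eq_prod_pow_gaussBinom {R : Type*} [CommMonoid R] (f : ℕ → R) :
    ∏ Z : Submodule F (Fin n → F), f (finrank F Z) =
      ∏ k ∈ Finset.range (n + 1), f k ^ gaussBinom F n k := by
  classical
  rw [← Finset.prod_fiberwise_of_maps_to (g := fun Z : Submodule F (Fin n → F) => finrank F Z)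
    (t := Finset.range (n + 1))]
  · refine Finset.prod_congr rfl fun k _ => ?_
    rw [gaussBinom, Nat.card_eq_fintype_card, Fintype.card_subtype]
    exact Finset.prod_eq_pow_card fun Z hZ => by rw [(Finset.mem_filter.1 hZ).2]
  · intro Z _
    have := Submodule.finrank_le Z
    rw [finrank_fin_fun] at this
    exact Finset.mem_range.2 (by omega)

end Intertwining

open Polynomial in
/-- The characteristic polynomial of `M_q(n)` equals
`∏_{k=0}^n (x - ((n-k)_q - (k)_q))^{[n choose k]_q}`. -/
theorem charpoly_Mq (F : Type) [Field F] [Fintype F] (n : ℕ) :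
    letI := Classical.decEq (Submodule F (Fin n → F))
    (Mq F n).charpoly =
      ∏ k ∈ Finset.range (n + 1),
        (X - C ((qInt (Fintype.card F) (n - k) : ℂ) - (qInt (Fintype.card F) k : ℂ)))
          ^ (gaussBinom F n k) := by
  let := Classical.decEq (Submodule F (Fin n → F))
  obtain ⟨e, he⟩ := exists_perm_finrank_add_eq F n
  rw [Matrix.charpoly_eq_of_mul_eq_mul det_containment Mq_mul_containment, charpoly_triangularForm,
    ← prod_finrank_eq_prod_pow_gaussBinom (fun k =>
      X - C ((qInt (Fintype.card F) (n - k) : ℂ) - (qInt (Fintype.card F) k : ℂ))),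
    ← Equiv.prod_comp e]
  refine Finset.prod_congr rfl fun Z _ => ?_
  have h := he Z
  rw [show Module.finrank F (e Z) = n - Module.finrank F Z by omega,
    show n - (n - Module.finrank F Z) = Module.finrank F Z by omega]
end

section
/- Let χ : H(n+1, F_q) → ℂ* be a nontrivial (one-dimensional) character of the abelian group H(n+1, F_q), and let ψ_k be the permutation character of the action of H(n+1,F_q) on A_q(n+1,k). Then for 1 ≤ k ≤ n+1, the character inner product [χ, ψ_k] = (1/|H(n+1,F_q)|) ∑_{g} χ(g)^{−1} · |{X ∈ A_q(n+1,k) : gX = X}| equals the Gaussian binomial coefficient [n−1 choose k−1]_q (which is 0 when k = n+1). -/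
/-- The copy of `F^m` inside `F^n`: vectors whose coordinates of index `≥ m`
vanish. -/
def coordSpace (F : Type) [Field F] (n m : ℕ) : Submodule F (Fin n → F) where
  carrier := {v | ∀ i : Fin n, m ≤ (i : ℕ) → v i = 0}
  add_mem' := by
    intro a b ha hb i hi
    simp [ha i hi, hb i hi]
  zero_mem' := by intro i hi; rfl
  smul_mem' := by
    intro c v hv i hi
    simp [hv i hi]

/-- The element of the group `H(n+1, F_q)` with parameter `a ∈ F^n`. -/
def hmat (F : Type) [Field F] (n : ℕ) (a : Fin n → F) :
    Matrix (Fin (n + 1)) (Fin (n + 1)) F :=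
  fun i j =>
    if i = j then 1
    else if h : (i : ℕ) < n ∧ (j : ℕ) = n then a ⟨(i : ℕ), h.1⟩ else 0

/-- The largest subspace on which the additive character `χ` is trivial. -/
def charKernel {F V : Type} [Field F] [AddCommGroup V] [Module F V]
    (χ : V → ℂ) (hhom : ∀ a b, χ (a + b) = χ a * χ b) (h0 : χ 0 = 1) : Submodule F V where
  carrier := {v | ∀ c : F, χ (c • v) = 1}
  add_mem' := by
    intro a b ha hb c
    simp [smul_add, hhom, ha c, hb c]
  zero_mem' := by intro c; simp [h0]
  smul_mem' := by
    intro d v hv c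
    rw [smul_smul]
    exact hv _

theorem le_charKernel_iff {F V : Type} [Field F] [AddCommGroup V] [Module F V]
    (χ : V → ℂ) (hhom : ∀ a b, χ (a + b) = χ a * χ b) (h0 : χ 0 = 1) (Y : Submodule F V) :
    Y ≤ charKernel χ hhom h0 ↔ ∀ a ∈ Y, χ a = 1 := by
  refine ⟨fun h a ha => by simpa using h ha 1, fun h a ha c => h _ (Y.smul_mem c ha)⟩

open Classical in
/-- The sum of `(χ a)⁻¹` over a subspace counts it when `χ` is trivial on it, and vanishes
otherwise. -/
theorem sum_inv_char_submodule {F V : Type} [Field F] [AddCommGroup V] [Module F V] [Fintype V]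
    (χ : V → ℂ) (hhom : ∀ a b, χ (a + b) = χ a * χ b) (h0 : χ 0 = 1) (Y : Submodule F V) :
    ∑ a : V, (if a ∈ Y then (χ a)⁻¹ else 0) =
      if Y ≤ charKernel χ hhom h0 then ((Finset.univ.filter fun a : V => a ∈ Y).card : ℂ) else 0 := by
  simp only [le_charKernel_iff χ hhom h0]
  split_ifs with h
  · rw [Finset.card_filter]
    push_cast
    refine Finset.sum_congr rfl fun a _ => ?_
    split_ifs with ha
    · simp [h a ha]
    · rfl
  · push Not at h
    obtain ⟨b, hb, hχ⟩ := h
    have hb0 : χ b ≠ 0 := by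
      intro h
      have := hhom b (-b)
      simp [h, h0] at this
    have key : ∑ a : V, (if a ∈ Y then (χ a)⁻¹ else 0) =
        (χ b)⁻¹ * ∑ a : V, (if a ∈ Y then (χ a)⁻¹ else 0) := by
      rw [Finset.mul_sum, ← Equiv.sum_comp (Equiv.addRight b)]
      refine Finset.sum_congr rfl fun a _ => ?_
      simp only [Equiv.coe_addRight, Y.add_mem_iff_left hb, hhom, mul_inv]
      split_ifs <;> ring
    have h1 : ((χ b)⁻¹ - 1) * ∑ a : V, (if a ∈ Y then (χ a)⁻¹ else 0) = 0 := by
      rw [sub_mul, ← key]; ring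
    rcases mul_eq_zero.mp h1 with h2 | h2
    · exact absurd (inv_eq_one.mp (sub_eq_zero.mp h2)) hχ
    · exact h2

/-- The subspace on which a nontrivial additive character is trivial is a hyperplane. -/
theorem finrank_charKernel {F V : Type} [Field F] [Fintype F] [AddCommGroup V] [Module F V]
    [Finite V] (χ : V → ℂ) (hhom : ∀ a b, χ (a + b) = χ a * χ b) (h0 : χ 0 = 1)
    (hnt : ∃ a, χ a ≠ 1) :
    Module.finrank F (charKernel (F := F) χ hhom h0) + 1 = Module.finrank F V := by
  set W : Submodule F V := charKernel χ hhom h0 with hW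
  have hfin : Module.Finite F V := Module.Finite.of_finite
  have hne : W ≠ ⊤ := by
    obtain ⟨a, ha⟩ := hnt
    intro h
    exact ha ((le_charKernel_iff χ hhom h0 ⊤).1 h.ge a trivial)
  have hlt := Submodule.finrank_lt hne
  have hquot := W.finrank_quotient_add_finrank
  let f : V → AddChar F ℂ := fun v =>
    { toFun := fun c => χ (c • v)
      map_zero_eq_one' := by simp [h0]
      map_add_eq_mul' := fun a b => by rw [add_smul, hhom] }
  have hf : ∀ u v, f u = f v → u - v ∈ W := by
    intro u v huv c
    have h1 : χ (c • u) = χ (c • v) := DFunLike.congr_fun huv c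
    have h2 := hhom (c • v) (-(c • v))
    rw [add_neg_cancel, h0] at h2
    rw [smul_sub, sub_eq_add_neg, hhom, h1, ← h2]
  have hcard : Nat.card (V ⧸ W) ≤ Nat.card (AddChar F ℂ) := by
    refine Nat.card_le_card_of_injective (fun x => f (Quotient.out x)) ?_
    intro x y hxy
    have := (Submodule.Quotient.eq W).2 (hf _ _ hxy)
    simpa [Submodule.Quotient.mk] using this
  have hdual : Nat.card (AddChar F ℂ) ≤ Nat.card F := by
    simp [Nat.card_eq_fintype_card]
  rw [Module.natCard_eq_pow_finrank (K := F)] at hcard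
  have hone : Module.finrank F (V ⧸ W) ≤ 1 := by
    by_contra! h
    have hq : 1 < Nat.card F := Finite.one_lt_card
    have := Nat.pow_lt_pow_right hq h
    rw [pow_one] at this
    omega
  omega

theorem finrank_map_eq_of_injective {F V V' : Type} [Field F] [AddCommGroup V] [Module F V]
    [AddCommGroup V'] [Module F V'] {f : V →ₗ[F] V'} (hf : Function.Injective f)
    (Y : Submodule F V) : Module.finrank F (Y.map f) = Module.finrank F Y :=
  (Submodule.equivMapOfInjective f hf Y).symm.finrank_eq

/-- The subspaces of dimension `k` inside a given subspace are counted by the Gaussian binomial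
coefficient. -/
theorem card_finrank_eq_and_le {F V : Type} [Field F] [Fintype F] [AddCommGroup V] [Module F V]
    [Module.Finite F V] (W : Submodule F V) (k : ℕ) :
    Nat.card {Y : Submodule F V // Module.finrank F Y = k ∧ Y ≤ W} =
      gaussBinom F (Module.finrank F W) k := by
  let e : W ≃ₗ[F] (Fin (Module.finrank F W) → F) := (Module.finBasis F W).equivFun
  let φ : (Fin (Module.finrank F W) → F) →ₗ[F] V := W.subtype ∘ₗ e.symm.toLinearMap
  have hφ : Function.Injective φ := W.injective_subtype.comp e.symm.injective
  have hφW : ∀ v, φ v ∈ W := fun v => (e.symm v).2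
  symm
  refine Nat.card_eq_of_bijective
    (fun X => ⟨X.1.map φ, by rw [finrank_map_eq_of_injective hφ, X.2],
      Submodule.map_le_iff_le_comap.2 fun v _ => hφW v⟩) ⟨?_, ?_⟩
  · intro X X' h
    exact Subtype.ext (Submodule.map_injective_of_injective hφ (congrArg Subtype.val h))
  · rintro ⟨Y, hY, hYW⟩
    have hmap : (Y.comap φ).map φ = Y := by
      rw [Submodule.map_comap_eq, inf_eq_right]
      intro y hy
      exact ⟨e ⟨y, hYW hy⟩, by simp [φ]⟩
    refine ⟨⟨Y.comap φ, ?_⟩, Subtype.ext hmap⟩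
    rw [← hY, ← finrank_map_eq_of_injective hφ, hmap]

/-- The inclusion of `F^n` in `F^{n+1}` appending a zero coordinate. -/
def snocZero (F : Type) [Field F] (n : ℕ) : (Fin n → F) →ₗ[F] (Fin (n + 1) → F) where
  toFun v := Fin.snoc (α := fun _ => F) v 0
  map_add' u v := by
    ext i; refine Fin.lastCases ?_ (fun j => ?_) i <;> simp
  map_smul' c v := by
    ext i; refine Fin.lastCases ?_ (fun j => ?_) i <;> simp

/-- The vector of `F^{n+1}` obtained by appending a coordinate `1`. -/
def snocOne (F : Type) [Field F] (n : ℕ) (v : Fin n → F) : Fin (n + 1) → F :=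
  Fin.snoc (α := fun _ => F) v 1

section

variable {F : Type} [Field F] {n : ℕ}

@[simp] theorem snocZero_last (v : Fin n → F) : snocZero F n v (Fin.last n) = 0 := by
  simp [snocZero]

@[simp] theorem snocZero_castSucc (v : Fin n → F) (i : Fin n) :
    snocZero F n v i.castSucc = v i := by
  simp [snocZero]

@[simp] theorem snocOne_last (v : Fin n → F) : snocOne F n v (Fin.last n) = 1 := by
  simp [snocOne]

@[simp] theorem snocOne_castSucc (v : Fin n → F) (i : Fin n) :
    snocOne F n v i.castSucc = v i := by
  simp [snocOne]

theorem snocZero_injective : Function.Injective (snocZero F n) := by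
  intro u v h
  ext i
  simpa using congrFun h i.castSucc

theorem snocOne_add (a v : Fin n → F) : snocOne F n (a + v) = snocZero F n a + snocOne F n v := by
  ext i; refine Fin.lastCases ?_ (fun j => ?_) i <;> simp

/-- A vector is the sum of a multiple of `snocOne v` and a vector of `F^n`. -/
theorem eq_snocZero_add_smul_snocOne (x : Fin (n + 1) → F) (v : Fin n → F) :
    x = snocZero F n (fun i => x i.castSucc - x (Fin.last n) * v i) +
      x (Fin.last n) • snocOne F n v := by
  ext i; refine Fin.lastCases ?_ (fun j => ?_) i <;> simp

theorem mem_coordSpace_iff (x : Fin (n + 1) → F) :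
    x ∈ coordSpace F (n + 1) n ↔ x (Fin.last n) = 0 := by
  refine ⟨fun h => h _ (by simp), fun h i hi => ?_⟩
  obtain rfl : i = Fin.last n := Fin.ext (by have := i.2; simp; omega)
  exact h

theorem not_le_coordSpace_iff (X : Submodule F (Fin (n + 1) → F)) :
    ¬ X ≤ coordSpace F (n + 1) n ↔ ∃ v, snocOne F n v ∈ X := by
  constructor
  · intro h
    obtain ⟨x, hx, hx'⟩ := SetLike.not_le_iff_exists.mp h
    rw [mem_coordSpace_iff] at hx'
    refine ⟨fun i => (x (Fin.last n))⁻¹ * x i.castSucc, ?_⟩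
    convert X.smul_mem (x (Fin.last n))⁻¹ hx using 1
    ext i; refine Fin.lastCases ?_ (fun j => ?_) i <;> simp [hx']
  · rintro ⟨v, hv⟩ h
    simpa [mem_coordSpace_iff] using h hv

theorem hmat_mulVec (a : Fin n → F) (x : Fin (n + 1) → F) :
    (hmat F n a).mulVec x = x + x (Fin.last n) • snocZero F n a := by
  ext i
  simp only [Matrix.mulVec, dotProduct, Fin.sum_univ_castSucc]
  refine Fin.lastCases ?_ (fun j => ?_) i
  · have : ∀ j : Fin n, Fin.last n ≠ j.castSucc := fun j => (Fin.castSucc_lt_last j).ne'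
    simp [hmat, this]
  · have h1 : ∀ l : Fin n, ¬ ((l : ℕ) = n) := fun l => l.2.ne
    have h2 : j.castSucc ≠ Fin.last n := (Fin.castSucc_lt_last j).ne
    simp [hmat, h1, h2, mul_comm]

/-- The stabilizer of a subspace not contained in `F^n`. -/
theorem map_hmat_eq_iff {X : Submodule F (Fin (n + 1) → F)} {v : Fin n → F}
    (hv : snocOne F n v ∈ X) (a : Fin n → F) :
    Submodule.map (Matrix.mulVecLin (hmat F n a)) X = X ↔ a ∈ X.comap (snocZero F n) := by
  rw [Submodule.mem_comap]
  constructor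
  · intro h
    have hmem : (hmat F n a).mulVec (snocOne F n v) ∈ X := by
      nth_rewrite 1 [← h]
      exact ⟨_, hv, rfl⟩
    rw [hmat_mulVec, snocOne_last, one_smul] at hmem
    exact (X.add_mem_iff_right hv).1 hmem
  · intro h
    refine le_antisymm ?_ ?_
    · rintro _ ⟨x, hx, rfl⟩
      rw [Matrix.mulVecLin_apply, hmat_mulVec]
      exact X.add_mem hx (X.smul_mem _ h)
    · intro x hx
      refine ⟨x - x (Fin.last n) • snocZero F n a, X.sub_mem hx (X.smul_mem _ h), ?_⟩
      rw [Matrix.mulVecLin_apply, hmat_mulVec]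
      simp

/-- A subspace containing `snocOne v` is determined by `v` and its intersection with `F^n`. -/
theorem map_comap_sup_span_snocOne {X : Submodule F (Fin (n + 1) → F)} {v : Fin n → F}
    (hv : snocOne F n v ∈ X) :
    (X.comap (snocZero F n)).map (snocZero F n) ⊔ Submodule.span F {snocOne F n v} = X := by
  refine le_antisymm (sup_le (Submodule.map_comap_le _ _) (by simpa using hv)) fun x hx => ?_
  have h := eq_snocZero_add_smul_snocOne x v
  rw [h]
  refine Submodule.add_mem_sup ⟨_, ?_, rfl⟩
    (Submodule.smul_mem _ _ (Submodule.mem_span_singleton_self _))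
  rw [SetLike.mem_coe, Submodule.mem_comap, ← X.add_mem_iff_left (X.smul_mem _ hv), ← h]
  exact hx

theorem comap_map_sup_span_snocOne (Y : Submodule F (Fin n → F)) (v : Fin n → F) :
    (Y.map (snocZero F n) ⊔ Submodule.span F {snocOne F n v}).comap (snocZero F n) = Y := by
  refine le_antisymm (fun x hx => ?_) fun x hx => Submodule.mem_sup_left ⟨x, hx, rfl⟩
  rw [Submodule.mem_comap, Submodule.mem_sup] at hx
  obtain ⟨_, ⟨y, hy, rfl⟩, z, hz, h⟩ := hx
  obtain ⟨c, rfl⟩ := Submodule.mem_span_singleton.mp hz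
  have hc : c = 0 := by simpa using congrFun h (Fin.last n)
  subst hc
  rw [zero_smul, add_zero] at h
  rwa [← snocZero_injective h]

theorem finrank_map_sup_span_snocOne (Y : Submodule F (Fin n → F)) (v : Fin n → F) :
    Module.finrank F ↥(Y.map (snocZero F n) ⊔ Submodule.span F {snocOne F n v}) =
      Module.finrank F Y + 1 := by
  have hdisj : Y.map (snocZero F n) ⊓ Submodule.span F {snocOne F n v} = ⊥ := by
    rw [eq_bot_iff]
    rintro _ ⟨⟨y, -, rfl⟩, hz⟩
    obtain ⟨c, hc⟩ := Submodule.mem_span_singleton.mp hz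
    have hc0 : c = 0 := by simpa using congrFun hc (Fin.last n)
    rw [← hc, hc0, zero_smul]
    exact Submodule.zero_mem _
  have hne : snocOne F n v ≠ 0 := fun h => by simpa using congrFun h (Fin.last n)
  have h := Submodule.finrank_sup_add_finrank_inf_eq (Y.map (snocZero F n))
    (Submodule.span F {snocOne F n v})
  rw [hdisj, finrank_bot, add_zero, finrank_map_eq_of_injective snocZero_injective,
    finrank_span_singleton hne] at h
  exact h

/-- Subspaces through `snocOne v` correspond to subspaces of `F^n`, of dimension one less. -/
theorem card_finrank_eq_and_snocOne_mem (W : Submodule F (Fin n → F)) (v : Fin n → F) (k : ℕ) :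
    Nat.card {X : Submodule F (Fin (n + 1) → F) //
      (Module.finrank F X = k + 1 ∧ X.comap (snocZero F n) ≤ W) ∧ snocOne F n v ∈ X} =
    Nat.card {Y : Submodule F (Fin n → F) // Module.finrank F Y = k ∧ Y ≤ W} := by
  refine (Nat.card_eq_of_bijective
    (fun Y => ⟨Y.1.map (snocZero F n) ⊔ Submodule.span F {snocOne F n v},
      ⟨by rw [finrank_map_sup_span_snocOne, Y.2.1],
        (comap_map_sup_span_snocOne Y.1 v).le.trans Y.2.2⟩,
      Submodule.mem_sup_right (Submodule.mem_span_singleton_self _)⟩)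
    ⟨?_, ?_⟩).symm
  · intro Y Y' h
    have h' := congrArg (Submodule.comap (snocZero F n)) (congrArg Subtype.val h)
    simp only [comap_map_sup_span_snocOne] at h'
    exact Subtype.ext h'
  · rintro ⟨X, ⟨hX, hW⟩, hv⟩
    have hS := map_comap_sup_span_snocOne hv
    refine ⟨⟨X.comap (snocZero F n), ?_, hW⟩, Subtype.ext hS⟩
    have := finrank_map_sup_span_snocOne (X.comap (snocZero F n)) v
    rw [hS, hX] at this
    omega

open Classical in
/-- The vectors `v` with `snocOne v ∈ X` form a coset of `X ∩ F^n`. -/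
theorem card_comap_snocZero_eq [Fintype F] {X : Submodule F (Fin (n + 1) → F)} {v : Fin n → F}
    (hv : snocOne F n v ∈ X) :
    (Finset.univ.filter fun a : Fin n → F => a ∈ X.comap (snocZero F n)).card =
      (Finset.univ.filter fun w : Fin n → F => snocOne F n w ∈ X).card := by
  refine Finset.card_equiv (Equiv.addRight v) fun a => ?_
  simp [snocOne_add, X.add_mem_iff_left hv]

end

/-- For a nontrivial character `χ` of `H(n+1, F_q) ≅ (F^n, +)` and `1 ≤ k ≤ n+1`,
the inner product of `χ` with the permutation character of `H(n+1, F_q)` acting on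
`A_q(n+1, k)` equals `[n−1 choose k−1]_q`. -/
theorem char_inner_product (F : Type) [Field F] [Fintype F] (n : ℕ)
    (χ : (Fin n → F) → ℂ) (hhom : ∀ a b, χ (a + b) = χ a * χ b)
    (h0 : χ 0 = 1) (hnt : ∃ a, χ a ≠ 1) (k : ℕ) (hk : 1 ≤ k) (hk' : k ≤ n + 1) :
    (1 / (Fintype.card F : ℂ) ^ n) *
      ∑ a : Fin n → F, (χ a)⁻¹ *
        (Nat.card {X : Submodule F (Fin (n + 1) → F) //
          (¬ X ≤ coordSpace F (n + 1) n ∧ Module.finrank F X = k) ∧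
            Submodule.map (Matrix.mulVecLin (hmat F n a)) X = X} : ℂ) =
      (gaussBinom F (n - 1) (k - 1) : ℂ) := by
  classical
  have : Fintype (Submodule F (Fin (n + 1) → F)) := Fintype.ofFinite _
  obtain ⟨k, rfl⟩ : ∃ l, k = l + 1 := ⟨k - 1, by omega⟩
  set W : Submodule F (Fin n → F) := charKernel χ hhom h0 with hW
  have hWdim : Module.finrank F W = n - 1 := by
    have := finrank_charKernel (F := F) χ hhom h0 hnt
    rw [← hW, Module.finrank_fin_fun] at this
    omega
  have hq : (Fintype.card F : ℂ) ^ n ≠ 0 := pow_ne_zero _ (by simp)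
  have hX : ∀ X : Submodule F (Fin (n + 1) → F),
      ∑ a : Fin n → F, (if (¬ X ≤ coordSpace F (n + 1) n ∧ Module.finrank F X = k + 1) ∧
          Submodule.map (Matrix.mulVecLin (hmat F n a)) X = X then (χ a)⁻¹ else 0) =
      ∑ v : Fin n → F, if (Module.finrank F X = k + 1 ∧ X.comap (snocZero F n) ≤ W) ∧
          snocOne F n v ∈ X then (1 : ℂ) else 0 := by
    intro X
    by_cases hA : ¬ X ≤ coordSpace F (n + 1) n
    · obtain ⟨v, hv⟩ := (not_le_coordSpace_iff X).1 hA
      by_cases hd : Module.finrank F X = k + 1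
      · have h := sum_inv_char_submodule χ hhom h0 (X.comap (snocZero F n))
        simp only [hA, hd, map_hmat_eq_iff hv, not_false_eq_true, true_and]
        rw [h, ← hW, card_comap_snocZero_eq hv]
        by_cases hYW : X.comap (snocZero F n) ≤ W <;> simp [hYW]
      · simp [hd]
    · have hno : ∀ v, snocOne F n v ∉ X := fun v hv =>
        hA ((not_le_coordSpace_iff X).2 ⟨v, hv⟩)
      simp [hA, hno]
  have hsum : ∑ a : Fin n → F, (χ a)⁻¹ *
        (Nat.card {X : Submodule F (Fin (n + 1) → F) //
          (¬ X ≤ coordSpace F (n + 1) n ∧ Module.finrank F X = k + 1) ∧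
            Submodule.map (Matrix.mulVecLin (hmat F n a)) X = X} : ℂ) =
      (Fintype.card F : ℂ) ^ n * (gaussBinom F (n - 1) k : ℂ) := by
    calc _ = ∑ a : Fin n → F, ∑ X : Submodule F (Fin (n + 1) → F),
          (if (¬ X ≤ coordSpace F (n + 1) n ∧ Module.finrank F X = k + 1) ∧
          Submodule.map (Matrix.mulVecLin (hmat F n a)) X = X then (χ a)⁻¹ else 0) := by
          refine Finset.sum_congr rfl fun a _ => ?_
          rw [Nat.card_eq_fintype_card, Fintype.card_subtype, Finset.sum_ite]
          simp [mul_comm]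
      _ = ∑ v : Fin n → F, ∑ X : Submodule F (Fin (n + 1) → F),
          if (Module.finrank F X = k + 1 ∧ X.comap (snocZero F n) ≤ W) ∧
          snocOne F n v ∈ X then (1 : ℂ) else 0 := by
          rw [Finset.sum_comm, Finset.sum_congr rfl fun X _ => hX X, Finset.sum_comm]
      _ = ∑ v : Fin n → F, (gaussBinom F (n - 1) k : ℂ) := by
          refine Finset.sum_congr rfl fun v _ => ?_
          rw [Finset.sum_boole, ← Fintype.card_subtype, ← Nat.card_eq_fintype_card,
            card_finrank_eq_and_snocOne_mem, card_finrank_eq_and_le, hWdim]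
      _ = _ := by simp
  rw [hsum, Nat.add_sub_cancel]
  field_simp
end

section
/- Let α = (α_1, …, α_n) ∈ {0,1}^n and set k = |S(α)| where S(α) = {i : α_i = 1}. Let w ∈ ℂ^{B_q(n)} be the vector with component w(X) = (−1)^{|S(α) ∩ P(X)|} q^{d(α,X)} at X ∈ B_q(n). Then M_q(n) · w = ((n−k)_q − (k)_q) · w. In particular w({0}) = q^{k(n−k)} and w(F_q^n) = (−1)^k. -/
noncomputable instance (F : Type) [Field F] [Fintype F] (m : ℕ) :
    Fintype (Submodule F (Fin m → F)) := Fintype.ofFinite _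

/-- The pivotal set `P(X)` of a subspace `X ⊆ F^n`: here `j : Fin n` stands for the
index `j+1 ∈ {1, …, n}`, and `j ∈ P(X)` iff `X ∩ F^(j+1) ⊄ F^j`. -/
noncomputable def pivots (F : Type) [Field F] [Fintype F] (n : ℕ)
    (X : Submodule F (Fin n → F)) : Finset (Fin n) :=
  open Classical in
  Finset.univ.filter fun j : Fin n =>
    ¬ (X ⊓ coordSpace F n ((j : ℕ) + 1) ≤ coordSpace F n (j : ℕ))

/-- `d(α, i) = |{j < i : α_j ≠ α_i}|`. -/
def dAlphaI (n : ℕ) (α : Fin n → Bool) (i : Fin n) : ℕ :=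
  (Finset.univ.filter fun j : Fin n => (j : ℕ) < (i : ℕ) ∧ α j ≠ α i).card

/-- `d(α, X) = ∑_{i ∉ P(X)} d(α, i)`. -/
noncomputable def dAlphaX (F : Type) [Field F] [Fintype F] (n : ℕ)
    (α : Fin n → Bool) (X : Submodule F (Fin n → F)) : ℕ :=
  ∑ i ∈ (Finset.univ \ pivots F n X), dAlphaI n α i

/-- The vector `w_α` with component `(−1)^(|S(α) ∩ P(X)|) q^(d(α,X))` at `X`. -/
noncomputable def wAlpha (F : Type) [Field F] [Fintype F] (n : ℕ)
    (α : Fin n → Bool) : Submodule F (Fin n → F) → ℂ :=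
  fun X =>
    (-1 : ℂ) ^ ((pivots F n X).filter fun i => α i = true).card *
      (Fintype.card F : ℂ) ^ (dAlphaX F n α X)

theorem mem_coordSpace {F : Type} [Field F] {n m : ℕ} {v : Fin n → F} :
    v ∈ coordSpace F n m ↔ ∀ i : Fin n, m ≤ (i : ℕ) → v i = 0 := Iff.rfl

theorem coordSpace_mono (F : Type) [Field F] (n : ℕ) : Monotone (coordSpace F n) :=
  fun _ _ h _ hv i hi => hv i (h.trans hi)

theorem coordSpace_zero (F : Type) [Field F] (n : ℕ) : coordSpace F n 0 = ⊥ := by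
  ext v
  simp [mem_coordSpace, funext_iff]

theorem coordSpace_self (F : Type) [Field F] (n : ℕ) : coordSpace F n n = ⊤ := by
  ext v
  simp only [mem_coordSpace, Submodule.mem_top, iff_true]
  intro i hi
  omega

theorem mem_coordSpace_of_succ {F : Type} [Field F] {n : ℕ} {j : Fin n} {v : Fin n → F}
    (hv : v ∈ coordSpace F n (j + 1)) : v ∈ coordSpace F n j ↔ v j = 0 := by
  refine ⟨fun h => h j le_rfl, fun h i hi => ?_⟩
  rcases hi.eq_or_lt with h' | h'
  · rwa [← Fin.ext h']
  · exact hv i h'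

/-- Two vectors of `F^(j+1)` agree modulo `F^j` up to a scalar, if the second one is not
in `F^j`. -/
theorem exists_sub_smul_mem_coordSpace {F : Type} [Field F] {n : ℕ} {j : Fin n}
    {v u : Fin n → F} (hv : v ∈ coordSpace F n (j + 1)) (hu : u ∈ coordSpace F n (j + 1))
    (hu' : u ∉ coordSpace F n j) : ∃ c : F, v - c • u ∈ coordSpace F n j := by
  rw [mem_coordSpace_of_succ hu] at hu'
  refine ⟨v j / u j, ?_⟩
  rw [mem_coordSpace_of_succ (Submodule.sub_mem _ hv (Submodule.smul_mem _ _ hu))]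
  simp [hu']

section Pivots

variable {F : Type} [Field F] [Fintype F] {n : ℕ}

theorem mem_pivots {X : Submodule F (Fin n → F)} {j : Fin n} :
    j ∈ pivots F n X ↔ ∃ x ∈ X, x ∈ coordSpace F n (j + 1) ∧ x ∉ coordSpace F n j := by
  simp [pivots, SetLike.not_le_iff_exists, and_assoc]

theorem pivots_mono : Monotone (pivots F n) := by
  intro X Y h j
  simp only [mem_pivots]
  rintro ⟨x, hx, h'⟩
  exact ⟨x, h hx, h'⟩

theorem pivots_bot : pivots F n ⊥ = ∅ := by
  ext j
  simp [mem_pivots]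

theorem pivots_top : pivots F n ⊤ = Finset.univ := by
  ext j
  simp only [mem_pivots, Finset.mem_univ, iff_true]
  refine ⟨Pi.single j 1, trivial, fun i hi => ?_, fun h => ?_⟩
  · exact Pi.single_eq_of_ne (by rintro rfl; omega) _
  · simpa using h j le_rfl

theorem finrank_inf_coordSpace_succ (X : Submodule F (Fin n → F)) (j : Fin n) :
    Module.finrank F ↥(X ⊓ coordSpace F n (j + 1)) =
      Module.finrank F ↥(X ⊓ coordSpace F n j) + if j ∈ pivots F n X then 1 else 0 := by
  have hle : X ⊓ coordSpace F n j ≤ X ⊓ coordSpace F n (j + 1) :=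
    inf_le_inf_left _ (coordSpace_mono F n (Nat.le_succ _))
  split_ifs with hj
  · obtain ⟨x, hx, hx1, hx0⟩ := mem_pivots.1 hj
    have hsup : X ⊓ coordSpace F n (j + 1) = X ⊓ coordSpace F n j ⊔ F ∙ x := by
      apply le_antisymm
      · rintro v ⟨hv, hv1⟩
        obtain ⟨c, hc⟩ := exists_sub_smul_mem_coordSpace hv1 hx1 hx0
        rw [← sub_add_cancel v (c • x)]
        exact Submodule.add_mem_sup ⟨X.sub_mem hv (X.smul_mem c hx), hc⟩
          (Submodule.smul_mem _ _ (Submodule.mem_span_singleton_self x))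
      · exact sup_le hle ((Submodule.span_singleton_le_iff_mem _ _).2 ⟨hx, hx1⟩)
    rw [hsup]
    exact Submodule.finrank_sup_span_singleton fun h => hx0 h.2
  · rw [add_zero]
    suffices h : X ⊓ coordSpace F n (j + 1) = X ⊓ coordSpace F n j by rw [h]
    refine le_antisymm (fun v hv => ⟨hv.1, ?_⟩) hle
    by_contra h
    exact hj (mem_pivots.2 ⟨v, hv.1, hv.2, h⟩)

theorem finrank_inf_coordSpace (X : Submodule F (Fin n → F)) {m : ℕ} (hm : m ≤ n) :
    Module.finrank F ↥(X ⊓ coordSpace F n m) =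
      ((pivots F n X).filter fun j : Fin n => (j : ℕ) < m).card := by
  induction m with
  | zero => simp [coordSpace_zero]
  | succ m ih =>
    rw [finrank_inf_coordSpace_succ X ⟨m, hm⟩, ih (by omega)]
    have key : (pivots F n X).filter (fun j : Fin n => (j : ℕ) < m + 1) =
        (pivots F n X).filter (fun j : Fin n => (j : ℕ) < m) ∪
          (pivots F n X).filter (fun j : Fin n => j = ⟨m, hm⟩) := by
      ext j
      simp only [Finset.mem_filter, Finset.mem_union, Fin.ext_iff]
      grind
    rw [key, Finset.card_union_of_disjoint, Finset.filter_eq']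
    · split_ifs <;> simp
    · rw [Finset.disjoint_left]
      simp only [Finset.mem_filter, Fin.ext_iff]
      grind

theorem card_pivots (X : Submodule F (Fin n → F)) :
    (pivots F n X).card = Module.finrank F X := by
  have h := finrank_inf_coordSpace X le_rfl
  rw [coordSpace_self, inf_top_eq] at h
  simpa using h.symm

theorem finrank_coordSpace {m : ℕ} (hm : m ≤ n) :
    Module.finrank F (coordSpace F n m) = m := by
  have h := finrank_inf_coordSpace (⊤ : Submodule F (Fin n → F)) hm
  rw [pivots_top, top_inf_eq] at h
  rw [h, Fin.card_filter_val_lt]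
  omega

/-- Adjoining to `X` a vector of `X + F^(j+1)` outside `X + F^j` adds the pivot `j`. -/
theorem pivots_sup_span_singleton {X : Submodule F (Fin n → F)} {j : Fin n} {v : Fin n → F}
    (hv : v ∈ X ⊔ coordSpace F n (j + 1)) (hv' : v ∉ X ⊔ coordSpace F n j) :
    j ∉ pivots F n X ∧ pivots F n (X ⊔ F ∙ v) = insert j (pivots F n X) := by
  obtain ⟨x, hx, u, hu, rfl⟩ := Submodule.mem_sup.1 hv
  have hu' : u ∉ coordSpace F n j := fun h => hv' (Submodule.add_mem_sup hx h)
  have hj : j ∉ pivots F n X := by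
    intro h
    obtain ⟨y, hy, hy1, hy0⟩ := mem_pivots.1 h
    obtain ⟨c, hc⟩ := exists_sub_smul_mem_coordSpace hu hy1 hy0
    apply hv'
    rw [show x + u = (x + c • y) + (u - c • y) by abel]
    exact Submodule.add_mem_sup (X.add_mem hx (X.smul_mem c hy)) hc
  refine ⟨hj, (Finset.eq_of_subset_of_card_le (Finset.insert_subset ?_
    (pivots_mono le_sup_left)) ?_).symm⟩
  · refine mem_pivots.2 ⟨u, ?_, hu, hu'⟩
    rw [← neg_add_cancel_left x u]
    exact Submodule.add_mem_sup (X.neg_mem hx) (by simp [Submodule.mem_span_singleton_self])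
  · rw [Finset.card_insert_of_notMem hj, card_pivots, card_pivots,
      Submodule.finrank_sup_span_singleton fun h => hv' (Submodule.mem_sup_left h)]

/-- The kernel of a functional on `X` which vanishes on `X ∩ F^i` but not on `X ∩ F^(i+1)`
loses the pivot `i`. -/
theorem pivots_map_ker {X : Submodule F (Fin n → F)} {i : Fin n} {φ : Module.Dual F X}
    (hφ : ∀ x : X, (x : Fin n → F) ∈ coordSpace F n i → φ x = 0)
    (hφ' : ¬ ∀ x : X, (x : Fin n → F) ∈ coordSpace F n (i + 1) → φ x = 0) :
    i ∈ pivots F n X ∧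
      pivots F n ((LinearMap.ker φ).map X.subtype) = (pivots F n X).erase i := by
  push Not at hφ'
  obtain ⟨x, hx1, hx⟩ := hφ'
  have hi : i ∈ pivots F n X := mem_pivots.2 ⟨x, x.2, hx1, fun h => hx (hφ x h)⟩
  have hi' : i ∉ pivots F n ((LinearMap.ker φ).map X.subtype) := by
    intro h
    obtain ⟨y, hy, hy1, hy0⟩ := mem_pivots.1 h
    obtain ⟨y, hyφ, rfl⟩ := hy
    obtain ⟨c, hc⟩ := exists_sub_smul_mem_coordSpace hx1 hy1 hy0
    have h0 := hφ (x - c • y) hc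
    rw [map_sub, map_smul, LinearMap.mem_ker.1 hyφ] at h0
    simp [hx] at h0
  refine ⟨hi, Finset.eq_of_subset_of_card_le (fun j hj => Finset.mem_erase.2
    ⟨fun h => hi' (h ▸ hj), pivots_mono (Submodule.map_subtype_le _ _) hj⟩) ?_⟩
  have hφ0 : φ ≠ 0 := by
    rintro rfl
    exact hx rfl
  rw [Finset.card_erase_of_mem hi, card_pivots, card_pivots,
    Submodule.finrank_map_subtype_eq, ← Module.Dual.finrank_ker_add_one_of_ne_zero hφ0]
  simp

end Pivots

/-- Summation along an increasing chain of finsets of a function that is constant on the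
successive differences. -/
theorem sum_sdiff_chain {ι R : Type*} [DecidableEq ι] [Ring R] {n : ℕ} (A : ℕ → Finset ι)
    (hA : Monotone A) (h : ι → R) (c : Fin n → R)
    (hc : ∀ j : Fin n, ∀ v ∈ A (j + 1), v ∉ A j → h v = c j) :
    ∑ v ∈ A n \ A 0, h v = ∑ j : Fin n, (((A (j + 1)).card : R) - (A j).card) * c j := by
  rw [Finset.sum_sdiff_eq_sub (hA (Nat.zero_le n)),
    ← Finset.sum_range_sub (fun m => ∑ v ∈ A m, h v) n, Finset.sum_range]
  refine Finset.sum_congr rfl fun j _ => ?_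
  have hj : A j ⊆ A (j + 1) := hA (Nat.le_succ _)
  rw [← Finset.sum_sdiff_eq_sub hj, Finset.sum_congr rfl fun v hv =>
    hc j v (Finset.mem_sdiff.1 hv).1 (Finset.mem_sdiff.1 hv).2, Finset.sum_const,
    nsmul_eq_mul, Finset.cast_card_sdiff hj]

/-- The antitone version of `sum_sdiff_chain`. -/
theorem sum_sdiff_antitone_chain {ι R : Type*} [DecidableEq ι] [Ring R] {n : ℕ}
    (A : ℕ → Finset ι) (hA : Antitone A) (h : ι → R) (c : Fin n → R)
    (hc : ∀ j : Fin n, ∀ v ∈ A j, v ∉ A (j + 1) → h v = c j) :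
    ∑ v ∈ A 0 \ A n, h v = ∑ j : Fin n, (((A j).card : R) - (A (j + 1)).card) * c j := by
  rw [Finset.sum_sdiff_eq_sub (hA (Nat.zero_le n)),
    ← Finset.sum_range_sub' (fun m => ∑ v ∈ A m, h v) n, Finset.sum_range]
  refine Finset.sum_congr rfl fun j _ => ?_
  have hj : A (j + 1) ⊆ A j := hA (Nat.le_succ _)
  rw [← Finset.sum_sdiff_eq_sub hj, Finset.sum_congr rfl fun v hv =>
    hc j v (Finset.mem_sdiff.1 hv).1 (Finset.mem_sdiff.1 hv).2, Finset.sum_const,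
    nsmul_eq_mul, Finset.cast_card_sdiff hj]

theorem qInt_succ (q m : ℕ) : qInt q (m + 1) = qInt q m + q ^ m :=
  Finset.sum_range_succ _ _

theorem qInt_succ' (q m : ℕ) : qInt q (m + 1) = q * qInt q m + 1 := by
  simp [qInt, Finset.sum_range_succ', Finset.mul_sum, pow_succ']

/-- The signed count behind the eigenvalue equation. -/
theorem sum_sign_mul_pow {R : Type*} [CommRing R] (q : ℕ) {n : ℕ} (α p : Fin n → Bool) :
    ∑ j : Fin n, (if α j then (-1 : R) else 1) *
        (q : R) ^ ((Finset.univ.filter fun l : Fin n => j < l ∧ p l).card +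
          (Finset.univ.filter fun l : Fin n => l < j ∧ (p j = true ↔ α l ≠ α j)).card) =
      (qInt q (Finset.univ.filter fun l : Fin n => α l = false).card : R) -
        (qInt q (Finset.univ.filter fun l : Fin n => α l = true).card : R) := by
  induction n with
  | zero => simp [qInt]
  | succ n ih =>
    have ih := ih (fun j => α j.castSucc) (fun j => p j.castSucc)
    simp only [Finset.card_filter] at ih ⊢
    simp only [Fin.sum_univ_castSucc, Fin.castSucc_lt_last, Fin.castSucc_lt_castSucc_iff,
      lt_self_iff_false, (Fin.castSucc_lt_last _).not_gt, true_and, false_and, if_false,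
      add_zero]
    set a := ∑ l : Fin n, if α l.castSucc = false then 1 else 0 with ha
    set b := ∑ l : Fin n, if α l.castSucc = true then 1 else 0 with hb
    have ha1 : (qInt q (a + 1) : R) = qInt q a + q ^ a := by simp [qInt_succ]
    have ha2 : (qInt q (a + 1) : R) = q * qInt q a + 1 := by simp [qInt_succ']
    have hb1 : (qInt q (b + 1) : R) = qInt q b + q ^ b := by simp [qInt_succ]
    have hb2 : (qInt q (b + 1) : R) = q * qInt q b + 1 := by simp [qInt_succ']
    cases p (Fin.last n) <;> cases α (Fin.last n) <;>
      simp only [if_true, if_false, add_zero, ne_eq, Bool.not_eq_true, Bool.not_eq_false,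
        Bool.false_eq_true, Bool.true_eq_false, false_iff, true_iff, add_right_comm _ 1,
        pow_succ, ← mul_assoc, ← Finset.sum_mul, ih, one_mul, neg_mul,
        Finset.sum_const_zero, zero_add, ← ha, ← hb]
    · linear_combination -ha1
    · linear_combination hb1
    · linear_combination -ha2 + hb2 - hb1
    · linear_combination ha1 - ha2 + hb2

theorem sum_dAlphaI {n : ℕ} (α : Fin n → Bool) :
    ∑ i, dAlphaI n α i = (Finset.univ.filter fun l : Fin n => α l = true).card *
      (Finset.univ.filter fun l : Fin n => α l = false).card := by
  induction n with
  | zero => simp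
  | succ n ih =>
    have ih := ih (fun j => α j.castSucc)
    simp only [dAlphaI, Finset.card_filter, Fin.val_fin_lt] at ih ⊢
    simp only [Fin.sum_univ_castSucc, Fin.castSucc_lt_last, Fin.castSucc_lt_castSucc_iff,
      lt_self_iff_false, (Fin.castSucc_lt_last _).not_gt, true_and, false_and, if_false,
      add_zero, ih]
    cases α (Fin.last n) <;>
      simp only [if_true, if_false, add_zero, ne_eq, Bool.not_eq_true, Bool.not_eq_false,
        Bool.false_eq_true, Bool.true_eq_false] <;> ring

section Covers

variable {F : Type} [Field F] [Fintype F] {n : ℕ}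

open Classical in
theorem card_filter_mem {V : Type*} [AddCommGroup V] [Module F V] [Fintype V]
    (X : Submodule F V) :
    (Finset.univ.filter fun v => v ∈ X).card = Fintype.card F ^ Module.finrank F X := by
  rw [← Module.card_eq_pow_finrank (K := F) (V := X), Fintype.card_subtype]

open Classical in
/-- Summation over the subspaces covering `X`, through the vectors that span them over `X`. -/
theorem sum_sup_span_singleton (X : Submodule F (Fin n → F))
    (h : Submodule F (Fin n → F) → ℂ) :
    ∑ v ∈ Finset.univ.filter (fun v => v ∉ X), h (X ⊔ F ∙ v) =
      ((Fintype.card F : ℂ) ^ (Module.finrank F X + 1) -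
          (Fintype.card F : ℂ) ^ Module.finrank F X) *
        ∑ Y ∈ Finset.univ.filter (fun Y => X ≤ Y ∧
          Module.finrank F Y = Module.finrank F X + 1), h Y := by
  rw [Finset.mul_sum, ← Finset.sum_fiberwise_of_maps_to (g := fun v => X ⊔ F ∙ v)
    (t := Finset.univ.filter (fun Y => X ≤ Y ∧
      Module.finrank F Y = Module.finrank F X + 1))]
  · refine Finset.sum_congr rfl fun Y hY => ?_
    obtain ⟨hXY, hdim⟩ := (Finset.mem_filter.1 hY).2
    rw [Finset.sum_congr rfl fun v hv => congrArg h (Finset.mem_filter.1 hv).2,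
      Finset.sum_const, nsmul_eq_mul]
    congr 1
    have key : (Finset.univ.filter (fun v => v ∉ X)).filter (fun v => X ⊔ F ∙ v = Y) =
        Finset.univ.filter (fun v => v ∈ Y) \ Finset.univ.filter (fun v => v ∈ X) := by
      ext v
      simp only [Finset.mem_filter, Finset.mem_univ, true_and, Finset.mem_sdiff]
      constructor
      · rintro ⟨hv, rfl⟩
        exact ⟨Submodule.mem_sup_right (Submodule.mem_span_singleton_self v), hv⟩
      · rintro ⟨hv, hvX⟩
        refine ⟨hvX, Submodule.eq_of_le_of_finrank_eq
          (sup_le hXY ((Submodule.span_singleton_le_iff_mem _ _).2 hv)) ?_⟩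
        rw [hdim, Submodule.finrank_sup_span_singleton hvX]
    rw [key, Finset.cast_card_sdiff, card_filter_mem, card_filter_mem, hdim]
    · push_cast
      rfl
    · exact Finset.monotone_filter_right _ fun v _ hv => hXY hv
  · intro v hv
    have hv := (Finset.mem_filter.1 hv).2
    exact Finset.mem_filter.2
      ⟨Finset.mem_univ _, le_sup_left, Submodule.finrank_sup_span_singleton hv⟩

open Classical in
/-- Summation over the hyperplanes of `X`, through the functionals that define them. -/
theorem sum_map_ker (X : Submodule F (Fin n → F)) [Fintype (Module.Dual F X)]
    (h : Submodule F (Fin n → F) → ℂ) :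
    ∑ φ ∈ Finset.univ.filter (fun φ : Module.Dual F X => φ ≠ 0),
        h ((LinearMap.ker φ).map X.subtype) =
      ((Fintype.card F : ℂ) - 1) *
        ∑ Y ∈ Finset.univ.filter (fun Y => Y ≤ X ∧
          Module.finrank F Y + 1 = Module.finrank F X), h Y := by
  rw [Finset.mul_sum, ← Finset.sum_fiberwise_of_maps_to
    (g := fun φ : Module.Dual F X => (LinearMap.ker φ).map X.subtype)
    (t := Finset.univ.filter (fun Y => Y ≤ X ∧
      Module.finrank F Y + 1 = Module.finrank F X))]
  · refine Finset.sum_congr rfl fun Y hY => ?_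
    obtain ⟨hYX, hdim⟩ := (Finset.mem_filter.1 hY).2
    rw [Finset.sum_congr rfl fun v hv => congrArg h (Finset.mem_filter.1 hv).2,
      Finset.sum_const, nsmul_eq_mul]
    congr 1
    obtain ⟨Z, rfl⟩ : ∃ Z : Submodule F X, Z.map X.subtype = Y :=
      ⟨Y.comap X.subtype, by simpa [Submodule.map_comap_subtype] using hYX⟩
    rw [Submodule.finrank_map_subtype_eq] at hdim
    have hann : Module.finrank F Z.dualAnnihilator = 1 := by
      have := Subspace.finrank_add_finrank_dualAnnihilator_eq Z
      omega
    have key : (Finset.univ.filter (fun φ : Module.Dual F X => φ ≠ 0)).filter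
          (fun φ => (LinearMap.ker φ).map X.subtype = Z.map X.subtype) =
        (Finset.univ.filter (fun φ => φ ∈ Z.dualAnnihilator)).erase 0 := by
      ext φ
      simp only [Finset.mem_filter, Finset.mem_univ, true_and, Finset.mem_erase,
        (Submodule.map_injective_of_injective X.injective_subtype).eq_iff]
      refine and_congr_right fun hφ => ⟨?_, fun hZ => ?_⟩
      · rintro rfl
        exact (Submodule.mem_dualAnnihilator φ).2 fun x hx => hx
      · refine (Submodule.eq_of_le_of_finrank_eq
          (fun x hx => (Submodule.mem_dualAnnihilator φ).1 hZ x hx) ?_).symm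
        have := Module.Dual.finrank_ker_add_one_of_ne_zero hφ
        omega
    rw [key, Finset.cast_card_erase_of_mem (by simp), card_filter_mem, hann]
    simp
  · intro φ hφ
    have hφ := (Finset.mem_filter.1 hφ).2
    refine Finset.mem_filter.2 ⟨Finset.mem_univ _, Submodule.map_subtype_le _ _, ?_⟩
    rw [Submodule.finrank_map_subtype_eq, Module.Dual.finrank_ker_add_one_of_ne_zero hφ]

end Covers

section PivotSums

variable {F : Type} [Field F] [Fintype F] {n : ℕ}

theorem card_filter_lt_add_card_filter_gt (P : Finset (Fin n)) (j : Fin n) :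
    (P.filter fun l : Fin n => (l : ℕ) < j).card + (P.filter fun l => j < l).card +
      (if j ∈ P then 1 else 0) = P.card := by
  have h1 : (if j ∈ P then 1 else 0) = (P.filter fun l => l = j).card := by
    rw [Finset.filter_eq']
    split_ifs <;> simp
  rw [h1]
  simp only [Finset.card_filter, ← Finset.sum_add_distrib, Finset.card_eq_sum_ones P]
  refine Finset.sum_congr rfl fun l _ => ?_
  simp only [Fin.lt_def, Fin.ext_iff]
  split_ifs <;> omega

theorem finrank_sup_coordSpace (X : Submodule F (Fin n → F)) {m : ℕ} (hm : m ≤ n) :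
    Module.finrank F ↥(X ⊔ coordSpace F n m) + Module.finrank F ↥(X ⊓ coordSpace F n m) =
      Module.finrank F X + m := by
  rw [Submodule.finrank_sup_add_finrank_inf_eq, finrank_coordSpace hm]

open Classical in
/-- The sum of a function of the pivotal set over the subspaces covering `X`. -/
theorem pow_mul_sum_covers (X : Submodule F (Fin n → F)) (g : Finset (Fin n) → ℂ) :
    (Fintype.card F : ℂ) ^ Module.finrank F X *
        ∑ Y ∈ Finset.univ.filter (fun Y => X ≤ Y ∧
          Module.finrank F Y = Module.finrank F X + 1), g (pivots F n Y) =
      ∑ j : Fin n, if j ∈ pivots F n X then 0 else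
        (Fintype.card F : ℂ) ^ (((pivots F n X).filter fun l => j < l).card + (j : ℕ)) *
          g (insert j (pivots F n X)) := by
  have hq : (Fintype.card F : ℂ) - 1 ≠ 0 :=
    sub_ne_zero.2 (by exact_mod_cast Fintype.one_lt_card.ne')
  have hsum := sum_sup_span_singleton X fun Y => g (pivots F n Y)
  have hchain := sum_sdiff_chain (n := n)
    (fun m => Finset.univ.filter fun v => v ∈ X ⊔ coordSpace F n m)
    (fun m m' h => Finset.monotone_filter_right _ fun v _ hv =>
      sup_le_sup_left (coordSpace_mono F n h) X hv)
    (fun v => g (pivots F n (X ⊔ F ∙ v))) (fun j => g (insert j (pivots F n X)))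
    (fun j v hv hv' => congrArg g (pivots_sup_span_singleton
      (Finset.mem_filter.1 hv).2 (by simpa using hv')).2)
  have hset : (Finset.univ.filter fun v => v ∈ X ⊔ coordSpace F n n) \
      (Finset.univ.filter fun v => v ∈ X ⊔ coordSpace F n 0) =
      Finset.univ.filter fun v => v ∉ X := by
    ext v
    simp [coordSpace_self, coordSpace_zero]
  simp only [hset, hsum, card_filter_mem, Nat.cast_pow] at hchain
  apply mul_left_cancel₀ hq
  rw [← mul_assoc, sub_mul, ← pow_succ', one_mul, hchain, Finset.mul_sum]
  refine Finset.sum_congr rfl fun j _ => ?_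
  have h1 := finrank_sup_coordSpace X j.2.le
  have h2 := finrank_sup_coordSpace X (m := j + 1) j.2
  have h3 := finrank_inf_coordSpace_succ X j
  have h4 := card_filter_lt_add_card_filter_gt (pivots F n X) j
  rw [card_pivots, ← finrank_inf_coordSpace X j.2.le] at h4
  split_ifs at h3 h4 ⊢ with hj
  · rw [show Module.finrank F ↥(X ⊔ coordSpace F n (j + 1)) =
      Module.finrank F ↥(X ⊔ coordSpace F n j) by omega]
    simp
  · rw [show Module.finrank F ↥(X ⊔ coordSpace F n (j + 1)) =
        ((pivots F n X).filter fun l => j < l).card + j + 1 by omega,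
      show Module.finrank F ↥(X ⊔ coordSpace F n j) =
        ((pivots F n X).filter fun l => j < l).card + j by omega]
    ring

open Classical in
/-- The sum of a function of the pivotal set over the hyperplanes of `X`. -/
theorem sum_hyperplanes (X : Submodule F (Fin n → F)) (g : Finset (Fin n) → ℂ) :
    ∑ Y ∈ Finset.univ.filter (fun Y => Y ≤ X ∧
        Module.finrank F Y + 1 = Module.finrank F X), g (pivots F n Y) =
      ∑ j : Fin n, if j ∈ pivots F n X then
        (Fintype.card F : ℂ) ^ ((pivots F n X).filter fun l => j < l).card *
          g ((pivots F n X).erase j) else 0 := by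
  have hq : (Fintype.card F : ℂ) - 1 ≠ 0 :=
    sub_ne_zero.2 (by exact_mod_cast Fintype.one_lt_card.ne')
  have : Finite (Module.Dual F X) := Module.finite_of_finite F
  let _ : Fintype (Module.Dual F X) := Fintype.ofFinite _
  have hsum := sum_map_ker X fun Y => g (pivots F n Y)
  let C : ℕ → Submodule F X := fun m => (coordSpace F n m).comap X.subtype
  have hC : ∀ {m} {φ : Module.Dual F X}, φ ∈ (C m).dualAnnihilator ↔
      ∀ x : X, (x : Fin n → F) ∈ coordSpace F n m → φ x = 0 :=
    fun {m φ} => Submodule.mem_dualAnnihilator φ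
  have hchain := sum_sdiff_antitone_chain (n := n)
    (fun m => Finset.univ.filter fun φ => φ ∈ (C m).dualAnnihilator)
    (fun m m' h => Finset.monotone_filter_right _ fun φ _ hφ =>
      Submodule.dualAnnihilator_anti (Submodule.comap_mono (coordSpace_mono F n h)) hφ)
    (fun φ => g (pivots F n ((LinearMap.ker φ).map X.subtype)))
    (fun j => g ((pivots F n X).erase j))
    (fun j φ hφ hφ' => congrArg g (pivots_map_ker (hC.1 (Finset.mem_filter.1 hφ).2)
      fun h => hφ' (Finset.mem_filter.2 ⟨Finset.mem_univ _, hC.2 h⟩)).2)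
  have hset : (Finset.univ.filter fun φ => φ ∈ (C 0).dualAnnihilator) \
      (Finset.univ.filter fun φ => φ ∈ (C n).dualAnnihilator) =
      Finset.univ.filter fun φ : Module.Dual F X => φ ≠ 0 := by
    ext φ
    simp [C, coordSpace_self, coordSpace_zero]
  have hdim : ∀ m, Module.finrank F (C m).dualAnnihilator +
      Module.finrank F ↥(X ⊓ coordSpace F n m) = Module.finrank F X := by
    intro m
    rw [← Submodule.map_comap_subtype, Submodule.finrank_map_subtype_eq, add_comm]
    exact Subspace.finrank_add_finrank_dualAnnihilator_eq _
  simp only [hset, hsum, card_filter_mem, Nat.cast_pow] at hchain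
  apply mul_left_cancel₀ hq
  rw [hchain, Finset.mul_sum]
  refine Finset.sum_congr rfl fun j _ => ?_
  have h1 := hdim j
  have h2 := hdim (j + 1)
  have h3 := finrank_inf_coordSpace_succ X j
  have h4 := card_filter_lt_add_card_filter_gt (pivots F n X) j
  rw [card_pivots, ← finrank_inf_coordSpace X j.2.le] at h4
  split_ifs at h3 h4 ⊢ with hj
  · rw [show Module.finrank F (C (j + 1)).dualAnnihilator =
        ((pivots F n X).filter fun l => j < l).card by omega,
      show Module.finrank F (C j).dualAnnihilator =
        ((pivots F n X).filter fun l => j < l).card + 1 by omega]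
    ring
  · rw [show Module.finrank F (C (j + 1)).dualAnnihilator =
      Module.finrank F (C j).dualAnnihilator by omega]
    simp

end PivotSums

/-- The component of `w_α` at a subspace with pivotal set `P`. -/
def wPivots (q : ℕ) {n : ℕ} (α : Fin n → Bool) (P : Finset (Fin n)) : ℂ :=
  (-1 : ℂ) ^ (P.filter fun i => α i = true).card *
    (q : ℂ) ^ ∑ i ∈ Finset.univ \ P, dAlphaI n α i

theorem pow_mul_wPivots_insert (q : ℕ) {n : ℕ} (α : Fin n → Bool) {P : Finset (Fin n)}
    {j : Fin n} (hj : j ∉ P) :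
    (q : ℂ) ^ dAlphaI n α j * wPivots q α (insert j P) =
      (if α j then -1 else 1) * wPivots q α P := by
  have h : Finset.univ \ P = insert j (Finset.univ \ insert j P) := by
    ext l
    by_cases hl : l = j <;> simp [hl, hj]
  rw [wPivots, wPivots, h, Finset.sum_insert (by simp), Finset.filter_insert]
  split_ifs with hα
  · rw [Finset.card_insert_of_notMem (by simp [hj])]
    ring
  · ring

theorem wPivots_erase (q : ℕ) {n : ℕ} (α : Fin n → Bool) {P : Finset (Fin n)}
    {j : Fin n} (hj : j ∈ P) :
    wPivots q α (P.erase j) =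
      (if α j then -1 else 1) * (q : ℂ) ^ dAlphaI n α j * wPivots q α P := by
  have h := pow_mul_wPivots_insert q α (Finset.notMem_erase j P)
  rw [Finset.insert_erase hj] at h
  rw [mul_assoc, h]
  split_ifs <;> ring

theorem dAlphaI_add_card_filter_eq {n : ℕ} (α : Fin n → Bool) (j : Fin n) :
    dAlphaI n α j + (Finset.univ.filter fun l : Fin n => l < j ∧ α l = α j).card = j := by
  have h : (Finset.univ.filter fun l : Fin n => l < j).card = j := by
    rw [Finset.filter_gt_eq_Iio, Fin.card_Iio]
  rw [← h, dAlphaI, ← Finset.card_filter_add_card_filter_not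
    (s := Finset.univ.filter fun l : Fin n => l < j) (fun l => α l = α j),
    Finset.filter_filter, Finset.filter_filter, add_comm]
  rfl

theorem mulVec_wAlpha (F : Type) [Field F] [Fintype F] (n : ℕ) (α : Fin n → Bool) :
    (Mq F n).mulVec (wAlpha F n α) =
      ((qInt (Fintype.card F) (Finset.univ.filter fun l : Fin n => α l = false).card : ℂ) -
        (qInt (Fintype.card F) (Finset.univ.filter fun l : Fin n => α l = true).card : ℂ)) •
          wAlpha F n α := by
  classical
  funext X
  set P := pivots F n X with hP
  have hM : (Mq F n).mulVec (wAlpha F n α) X =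
      ∑ Y ∈ Finset.univ.filter (fun Y => Y ≤ X ∧
          Module.finrank F Y + 1 = Module.finrank F X),
        wPivots (Fintype.card F) α (pivots F n Y) +
      (Fintype.card F : ℂ) ^ Module.finrank F X *
        ∑ Y ∈ Finset.univ.filter (fun Y => X ≤ Y ∧
          Module.finrank F Y = Module.finrank F X + 1),
        wPivots (Fintype.card F) α (pivots F n Y) := by
    rw [Finset.sum_filter, Finset.sum_filter, Finset.mul_sum, ← Finset.sum_add_distrib]
    refine Finset.sum_congr rfl fun Y _ => ?_
    change Mq F n X Y * wPivots (Fintype.card F) α (pivots F n Y) = _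
    unfold Mq
    split_ifs with h1 h2
    · omega
    · simp
    · simp
    · simp
  rw [hM, sum_hyperplanes, pow_mul_sum_covers, ← Finset.sum_add_distrib,
    ← sum_sign_mul_pow _ α (fun j => decide (j ∈ P)), Pi.smul_apply, smul_eq_mul,
    Finset.sum_mul]
  refine Finset.sum_congr rfl fun j _ => ?_
  have hcard : (Finset.univ.filter fun l : Fin n => j < l ∧ decide (l ∈ P) = true).card =
      (P.filter fun l => j < l).card := by
    congr 1
    ext l
    simp [and_comm]
  rw [hcard, ← hP]
  change _ = _ * wPivots (Fintype.card F) α P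
  by_cases hj : j ∈ P
  · have hd : (Finset.univ.filter fun l : Fin n =>
        l < j ∧ (decide (j ∈ P) = true ↔ α l ≠ α j)).card = dAlphaI n α j := by
      simp [hj, dAlphaI]
    rw [if_pos hj, if_pos hj, add_zero, wPivots_erase _ α hj, hd]
    ring
  · have hd : (Finset.univ.filter fun l : Fin n =>
        l < j ∧ (decide (j ∈ P) = true ↔ α l ≠ α j)).card =
        (Finset.univ.filter fun l : Fin n => l < j ∧ α l = α j).card := by
      simp [hj]
    rw [if_neg hj, if_neg hj, zero_add, hd]
    rw [← dAlphaI_add_card_filter_eq α j]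
    linear_combination (Fintype.card F : ℂ) ^ ((P.filter fun l => j < l).card +
      (Finset.univ.filter fun l : Fin n => l < j ∧ α l = α j).card) *
        pow_mul_wPivots_insert (Fintype.card F) α hj

/-- `w_α` is an eigenvector of `M_q(n)` with eigenvalue `(n−k)_q − (k)_q`, where
`k = |S(α)|`; its component at the zero subspace is `q^(k(n−k))` and its component
at `F^n` is `(−1)^k`. -/
theorem wAlpha_eigenvector (F : Type) [Field F] [Fintype F] (n : ℕ)
    (α : Fin n → Bool) (k : ℕ)
    (hk : k = (Finset.univ.filter fun i : Fin n => α i = true).card) :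
    (Mq F n).mulVec (wAlpha F n α) =
      ((qInt (Fintype.card F) (n - k) : ℂ) - (qInt (Fintype.card F) k : ℂ)) •
        wAlpha F n α ∧
    wAlpha F n α ⊥ = (Fintype.card F : ℂ) ^ (k * (n - k)) ∧
    wAlpha F n α ⊤ = (-1 : ℂ) ^ k := by
  have hk' : n - k = (Finset.univ.filter fun i : Fin n => α i = false).card := by
    have h := Finset.card_filter_add_card_filter_not (s := Finset.univ)
      fun i : Fin n => α i = true
    simp only [Bool.not_eq_true, Finset.card_univ, Fintype.card_fin] at h
    omega
  refine ⟨?_, ?_, ?_⟩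
  · rw [hk', hk]
    exact mulVec_wAlpha F n α
  · rw [hk', hk, ← sum_dAlphaI]
    simp [wAlpha, dAlphaX, pivots_bot]
  · rw [hk]
    simp [wAlpha, dAlphaX, pivots_top]
end

section
/- There exists a basis of ℂ^{B_q(n)} consisting of eigenvectors of M_q(n) which is orthogonal with respect to the inner product ⟨u,v⟩_π := ∑_{X ∈ B_q(n)} conj(u(X)) v(X) π(X), and in which exactly [n choose k]_q basis vectors have eigenvalue (n−k)_q − (k)_q, for each k = 0, 1, …, n. -/
/-- The stationary distribution `π(X) = q^(binom (dim X) 2) / P_q(n)`, where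
`P_q(n) = ∏_{k=0}^{n-1} (1 + q^k)`. -/
noncomputable def piDist (F : Type) [Field F] [Fintype F] (n : ℕ)
    (X : Submodule F (Fin n → F)) : ℂ :=
  (Fintype.card F : ℂ) ^ (Nat.choose (Module.finrank F X) 2) /
    ∏ k ∈ Finset.range n, (1 + (Fintype.card F : ℂ) ^ k)

/-- The inner product `⟨u, v⟩_π = ∑_X conj(u X) (v X) π(X)` on `ℂ^(B_q(n))`. -/
noncomputable def innerPi (F : Type) [Field F] [Fintype F] (n : ℕ)
    (u v : Submodule F (Fin n → F) → ℂ) : ℂ :=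
  ∑ X : Submodule F (Fin n → F), (starRingEnd ℂ) (u X) * v X * piDist F n X

theorem mul_qInt (q m : ℕ) (hq : 1 ≤ q) : qInt q m * (q - 1) + 1 = q ^ m := by
  unfold qInt
  have h := geom_sum_mul_of_one_le hq m
  rw [h]
  exact Nat.sub_add_cancel (Nat.one_le_pow _ _ hq)

theorem finrank_sup_span_singleton {F V : Type*} [Field F] [AddCommGroup V] [Module F V]
    [FiniteDimensional F V] (X : Submodule F V) {v : V} (hv : v ∉ X) :
    Module.finrank F (X ⊔ Submodule.span F {v} : Submodule F V) = Module.finrank F X + 1 := by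
  have hv0 : v ≠ 0 := fun h => hv (h ▸ X.zero_mem)
  have h := Submodule.finrank_sup_add_finrank_inf_eq X (Submodule.span F {v})
  have hd : X ⊓ Submodule.span F {v} = ⊥ := by
    rw [← disjoint_iff, Submodule.disjoint_span_singleton' hv0]
    exact hv
  rw [hd, finrank_bot, finrank_span_singleton hv0] at h
  exact h

/-- The number of `Z` covering `X` inside `U`. -/
theorem card_covers {F V : Type*} [Field F] [Fintype F] [AddCommGroup V] [Module F V]
    [FiniteDimensional F V] (X U : Submodule F V) (h : X ≤ U) :
    Nat.card {Z : Submodule F V // X ≤ Z ∧ Z ≤ U ∧ Module.finrank F Z = Module.finrank F X + 1} =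
      qInt (Fintype.card F) (Module.finrank F U - Module.finrank F X) := by
  classical
  have : Finite V := Module.finite_of_finite F
  have : Fintype V := Fintype.ofFinite V
  have : Fintype (Submodule F V) := Fintype.ofFinite _
  set q := Fintype.card F with hq
  have hq1 : 1 < q := Fintype.one_lt_card
  have hcard : ∀ Z : Submodule F V, X ≤ Z →
      (Finset.univ.filter fun v => v ∈ Z ∧ v ∉ X).card + q ^ Module.finrank F X =
        q ^ Module.finrank F Z := by
    intro Z hZ
    rw [hq, ← Module.card_eq_pow_finrank (K := F) (V := X),
      ← Module.card_eq_pow_finrank (K := F) (V := Z),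
      Fintype.card_subtype, Fintype.card_subtype, ← Finset.card_union_of_disjoint]
    · congr 1
      ext v
      simp only [Finset.mem_union, Finset.mem_filter, Finset.mem_univ, true_and]
      have := @hZ v
      tauto
    · rw [Finset.disjoint_left]
      simp
  rw [Nat.card_eq_fintype_card, Fintype.card_subtype]
  set S := Finset.univ.filter fun Z : Submodule F V =>
    X ≤ Z ∧ Z ≤ U ∧ Module.finrank F Z = Module.finrank F X + 1 with hS
  have hmaps : Set.MapsTo (fun v : V => X ⊔ Submodule.span F {v})
      (Finset.univ.filter fun v => v ∈ U ∧ v ∉ X) S := by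
    intro v hv
    simp only [Finset.coe_filter, Finset.mem_univ, true_and, Set.mem_ofPred_eq, hS] at hv ⊢
    exact ⟨le_sup_left, sup_le h (by simpa using hv.1), finrank_sup_span_singleton X hv.2⟩
  have hcount := Finset.card_eq_sum_card_fiberwise hmaps
  have hfib : ∀ Z ∈ S, ((Finset.univ.filter fun v => v ∈ U ∧ v ∉ X).filter
      fun v => X ⊔ Submodule.span F {v} = Z).card = q ^ Module.finrank F X * (q - 1) := by
    intro Z hZ
    simp only [hS, Finset.mem_filter, Finset.mem_univ, true_and] at hZ
    have hcZ := hcard Z hZ.1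
    have heq : ((Finset.univ.filter fun v => v ∈ U ∧ v ∉ X).filter
      fun v => X ⊔ Submodule.span F {v} = Z) = Finset.univ.filter fun v => v ∈ Z ∧ v ∉ X := by
      ext v
      simp only [Finset.mem_filter, Finset.mem_univ, true_and]
      constructor
      · rintro ⟨⟨_, hX⟩, rfl⟩
        exact ⟨Submodule.mem_sup_right (Submodule.mem_span_singleton_self v), hX⟩
      · rintro ⟨hvZ, hX⟩
        refine ⟨⟨hZ.2.1 hvZ, hX⟩, ?_⟩
        apply Submodule.eq_of_le_of_finrank_eq
        · exact sup_le hZ.1 (by simpa using hvZ)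
        · rw [finrank_sup_span_singleton X hX, hZ.2.2]
    rw [heq, Nat.mul_sub, mul_one, ← pow_succ, ← hZ.2.2, ← hcZ, Nat.add_sub_cancel]
  rw [Finset.sum_congr rfl hfib, Finset.sum_const, smul_eq_mul] at hcount
  have hU := hcard U h
  have hm := mul_qInt q (Module.finrank F U - Module.finrank F X) hq1.le
  have hle := Submodule.finrank_mono h
  have hpos : 0 < q ^ Module.finrank F X * (q - 1) :=
    Nat.mul_pos (pow_pos (by omega) _) (by omega)
  apply Nat.eq_of_mul_eq_mul_right hpos
  rw [← hcount]
  apply Nat.add_right_cancel (m := q ^ Module.finrank F X)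
  rw [hU, ← Nat.add_sub_cancel' hle, pow_add, ← hm, Nat.add_sub_cancel' hle]
  ring

/-- The number of `Z` covered by `X` and containing `Y`. -/
theorem card_covered {F V : Type*} [Field F] [Fintype F] [AddCommGroup V] [Module F V]
    [FiniteDimensional F V] (Y X : Submodule F V) (h : Y ≤ X) :
    Nat.card {Z : Submodule F V // Z ≤ X ∧ Module.finrank F Z + 1 = Module.finrank F X ∧ Y ≤ Z} =
      qInt (Fintype.card F) (Module.finrank F X - Module.finrank F Y) := by
  have hdim : ∀ Z : Submodule F V, Module.finrank F Z + Module.finrank F Z.dualAnnihilator =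
    Module.finrank F V := fun Z => Subspace.finrank_add_finrank_dualAnnihilator_eq Z
  have hXY := card_covers X.dualAnnihilator Y.dualAnnihilator
    (Subspace.dualAnnihilator_le_dualAnnihilator_iff.2 h)
  have hX := hdim X
  have hY := hdim Y
  have e : {Z : Submodule F V // Z ≤ X ∧ Module.finrank F Z + 1 = Module.finrank F X ∧ Y ≤ Z} ≃
      {Z : Submodule F (Module.Dual F V) // X.dualAnnihilator ≤ Z ∧ Z ≤ Y.dualAnnihilator ∧
        Module.finrank F Z = Module.finrank F X.dualAnnihilator + 1} := by
    refine ((Subspace.orderIsoFiniteDimensional (K := F) (V := V)).toEquiv.trans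
      OrderDual.ofDual).subtypeEquiv fun Z => ?_
    have hZ := hdim Z
    change _ ↔ X.dualAnnihilator ≤ Z.dualAnnihilator ∧ Z.dualAnnihilator ≤ Y.dualAnnihilator ∧
      Module.finrank F Z.dualAnnihilator = _
    rw [Subspace.dualAnnihilator_le_dualAnnihilator_iff,
      Subspace.dualAnnihilator_le_dualAnnihilator_iff]
    constructor
    · rintro ⟨a, b, c⟩
      exact ⟨a, c, by omega⟩
    · rintro ⟨a, c, b⟩
      exact ⟨a, by omega, c⟩
  rw [Nat.card_congr e, hXY]
  congr 1
  omega

theorem qInt_add_cast (q a b : ℕ) :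
    (qInt q (a + b) : ℂ) = qInt q a + (q : ℂ) ^ a * qInt q b := by
  unfold qInt
  push_cast
  rw [Finset.sum_range_add, Finset.mul_sum]
  simp only [pow_add]

/-- The eigenvalue `(n-k)_q - (k)_q`. -/
noncomputable def eigVal (F : Type) [Fintype F] (n k : ℕ) : ℂ :=
  (qInt (Fintype.card F) (n - k) : ℂ) - (qInt (Fintype.card F) k : ℂ)

theorem eigVal_sub (F : Type) [Fintype F] {n k w : ℕ} (hk : k ≤ n) (hw : w ≤ k) :
    eigVal F n w - eigVal F n k =
      ((Fintype.card F : ℂ) ^ (n - k) + (Fintype.card F : ℂ) ^ w) *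
        qInt (Fintype.card F) (k - w) := by
  obtain ⟨a, rfl⟩ := Nat.exists_eq_add_of_le hw
  obtain ⟨b, rfl⟩ := Nat.exists_eq_add_of_le hk
  have h1 : w + a + b - w = b + a := by omega
  have h2 : w + a + b - (w + a) = b := by omega
  have h3 : w + a - w = a := by omega
  simp only [eigVal, h1, h2, h3, qInt_add_cast]
  ring

theorem card_pow_add_card_pow_ne_zero (F : Type) [Field F] [Fintype F] (a b : ℕ) :
    (Fintype.card F : ℂ) ^ a + (Fintype.card F : ℂ) ^ b ≠ 0 := by
  have : 0 < Fintype.card F ^ a + Fintype.card F ^ b :=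
    Nat.add_pos_left (pow_pos Fintype.card_pos _) _
  exact_mod_cast this.ne'

theorem eigVal_ne_of_lt (F : Type) [Field F] [Fintype F] {n k w : ℕ} (hk : k ≤ n) (hw : w < k) :
    eigVal F n w ≠ eigVal F n k := by
  rw [← sub_ne_zero, eigVal_sub F hk hw.le]
  refine mul_ne_zero (card_pow_add_card_pow_ne_zero F _ _) ?_
  have : 0 < qInt (Fintype.card F) (k - w) :=
    Finset.sum_pos (fun i _ => pow_pos Fintype.card_pos _)
      (Finset.nonempty_range_iff.2 (Nat.sub_pos_of_lt hw).ne')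
  exact_mod_cast this.ne'

theorem sum_ite_one_eq_natCard {α : Type*} [Fintype α] (p : α → Prop) [DecidablePred p] :
    ∑ a, (if p a then (1 : ℂ) else 0) = Nat.card {a // p a} := by
  rw [Finset.sum_boole, Nat.card_eq_fintype_card, Fintype.card_subtype]

open Classical in
theorem sum_covered (F : Type) [Field F] [Fintype F] (n : ℕ) (Y X : Submodule F (Fin n → F)) :
    ∑ Z : Submodule F (Fin n → F),
      (if Z ≤ X ∧ Module.finrank F Z + 1 = Module.finrank F X ∧ Y ≤ Z then (1 : ℂ) else 0) =
    if Y ≤ X then (qInt (Fintype.card F) (Module.finrank F X - Module.finrank F Y) : ℂ) else 0 := by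
  split_ifs with h
  · rw [sum_ite_one_eq_natCard, card_covered Y X h]
  · exact Finset.sum_eq_zero fun Z _ => if_neg fun hZ => h (hZ.2.2.trans hZ.1)

open Classical in
theorem sum_covers_within (F : Type) [Field F] [Fintype F] (n : ℕ)
    (X Y : Submodule F (Fin n → F)) :
    ∑ Z : Submodule F (Fin n → F),
      (if X ≤ Z ∧ Z ≤ Y ∧ Module.finrank F Z = Module.finrank F X + 1 then (1 : ℂ) else 0) =
    if X ≤ Y then (qInt (Fintype.card F) (Module.finrank F Y - Module.finrank F X) : ℂ) else 0 := by
  split_ifs with h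
  · rw [sum_ite_one_eq_natCard, card_covers X Y h]
  · exact Finset.sum_eq_zero fun Z _ => if_neg fun hZ => h (hZ.1.trans hZ.2.1)

open Classical in
theorem sum_covers (F : Type) [Field F] [Fintype F] (n : ℕ) (X Y : Submodule F (Fin n → F)) :
    ∑ Z : Submodule F (Fin n → F),
      (if X ≤ Z ∧ Module.finrank F Z = Module.finrank F X + 1 ∧ Y ≤ Z then (1 : ℂ) else 0) =
    if Y ≤ X then (qInt (Fintype.card F) (n - Module.finrank F X) : ℂ)
    else if Module.finrank F (X ⊓ Y : Submodule F (Fin n → F)) + 1 = Module.finrank F Y then 1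
    else 0 := by
  have hdim := Submodule.finrank_sup_add_finrank_inf_eq X Y
  split_ifs with h h1
  · have := sum_covers_within F n X ⊤
    rw [if_pos le_top, finrank_top, Module.finrank_fin_fun] at this
    rw [← this]
    refine Finset.sum_congr rfl fun Z _ => if_congr ?_ rfl rfl
    exact ⟨fun hZ => ⟨hZ.1, le_top, hZ.2.1⟩, fun hZ => ⟨hZ.1, hZ.2.2, h.trans hZ.1⟩⟩
  · rw [Finset.sum_eq_single (X ⊔ Y)]
    · exact if_pos ⟨le_sup_left, by omega, le_sup_right⟩
    · refine fun Z _ hne => if_neg fun hZ => hne ?_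
      exact (Submodule.eq_of_le_of_finrank_eq (sup_le hZ.1 hZ.2.2) (by omega)).symm
    · simp
  · refine Finset.sum_eq_zero fun Z _ => if_neg fun hZ => ?_
    have hle := Submodule.finrank_mono (sup_le hZ.1 hZ.2.2)
    have hlt := Submodule.finrank_lt_finrank_of_lt (inf_lt_right.2 h : X ⊓ Y < Y)
    omega

open Classical in
theorem sum_covered_within (F : Type) [Field F] [Fintype F] (n : ℕ)
    (X Y : Submodule F (Fin n → F)) :
    ∑ W : Submodule F (Fin n → F),
      (if W ≤ Y ∧ Module.finrank F W + 1 = Module.finrank F Y ∧ W ≤ X then (1 : ℂ) else 0) =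
    if Y ≤ X then (qInt (Fintype.card F) (Module.finrank F Y) : ℂ)
    else if Module.finrank F (X ⊓ Y : Submodule F (Fin n → F)) + 1 = Module.finrank F Y then 1
    else 0 := by
  split_ifs with h h1
  · have := sum_covered F n ⊥ Y
    rw [if_pos bot_le, finrank_bot, Nat.sub_zero] at this
    rw [← this]
    refine Finset.sum_congr rfl fun W _ => if_congr ?_ rfl rfl
    exact ⟨fun hW => ⟨hW.1, hW.2.1, bot_le⟩, fun hW => ⟨hW.1, hW.2.1, hW.1.trans h⟩⟩
  · rw [Finset.sum_eq_single (X ⊓ Y)]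
    · exact if_pos ⟨inf_le_right, h1, inf_le_left⟩
    · refine fun W _ hne => if_neg fun hW => hne ?_
      exact Submodule.eq_of_le_of_finrank_eq (le_inf hW.2.2 hW.1) (by omega)
    · simp
  · refine Finset.sum_eq_zero fun W _ => if_neg fun hW => ?_
    have hle := Submodule.finrank_mono (le_inf hW.2.2 hW.1)
    have hlt := Submodule.finrank_lt_finrank_of_lt (inf_lt_right.2 h : X ⊓ Y < Y)
    omega

open Classical in
/-- The weighted zeta function `X ↦ [Y ≤ X] q^{-dim Y dim X}`. -/
noncomputable def zetaVec (F : Type) [Field F] [Fintype F] (n : ℕ)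
    (Y X : Submodule F (Fin n → F)) : ℂ :=
  if Y ≤ X then ((Fintype.card F : ℂ) ^ (Module.finrank F Y * Module.finrank F X))⁻¹ else 0

open Classical in
theorem Mq_mulVec_zetaVec_apply (F : Type) [Field F] [Fintype F] (n : ℕ)
    (Y X : Submodule F (Fin n → F)) :
    (Mq F n).mulVec (zetaVec F n Y) X =
      ((Fintype.card F : ℂ) ^ (Module.finrank F Y * Module.finrank F X))⁻¹ *
      ((Fintype.card F : ℂ) ^ Module.finrank F Y *
        (∑ Z : Submodule F (Fin n → F),
          if Z ≤ X ∧ Module.finrank F Z + 1 = Module.finrank F X ∧ Y ≤ Z then (1 : ℂ) else 0) +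
      (Fintype.card F : ℂ) ^ Module.finrank F X * ((Fintype.card F : ℂ) ^ Module.finrank F Y)⁻¹ *
        (∑ Z : Submodule F (Fin n → F),
          if X ≤ Z ∧ Module.finrank F Z = Module.finrank F X + 1 ∧ Y ≤ Z then (1 : ℂ) else 0)) := by
  have hq : (Fintype.card F : ℂ) ≠ 0 := Nat.cast_ne_zero.2 Fintype.card_ne_zero
  rw [Matrix.mulVec, dotProduct, Finset.mul_sum, Finset.mul_sum, ← Finset.sum_add_distrib,
    Finset.mul_sum]
  refine Finset.sum_congr rfl fun Z _ => ?_
  simp only [Mq, zetaVec]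
  by_cases hY : Y ≤ Z
  · by_cases h1 : Z ≤ X ∧ Module.finrank F Z + 1 = Module.finrank F X
    · have h2 : ¬ (X ≤ Z ∧ Module.finrank F Z = Module.finrank F X + 1 ∧ Y ≤ Z) := by
        rintro ⟨-, h, -⟩
        omega
      rw [if_pos h1, if_pos hY, if_pos ⟨h1.1, h1.2, hY⟩, if_neg h2, ← h1.2,
        Nat.mul_succ, pow_add]
      field_simp
      ring
    · rw [if_neg h1, if_pos hY,
        if_neg (fun h : Z ≤ X ∧ Module.finrank F Z + 1 = Module.finrank F X ∧ Y ≤ Z =>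
          h1 ⟨h.1, h.2.1⟩)]
      by_cases h2 : X ≤ Z ∧ Module.finrank F Z = Module.finrank F X + 1
      · rw [if_pos h2, if_pos ⟨h2.1, h2.2, hY⟩, h2.2, Nat.mul_succ, pow_add]
        field_simp
        ring
      · rw [if_neg h2, if_neg (fun h => h2 ⟨h.1, h.2.1⟩)]
        simp
  · simp [hY]

open Classical in
theorem sum_covered_zetaVec (F : Type) [Field F] [Fintype F] (n : ℕ)
    (Y X : Submodule F (Fin n → F)) :
    ∑ W : Submodule F (Fin n → F),
      (if W ≤ Y ∧ Module.finrank F W + 1 = Module.finrank F Y then zetaVec F n W X else 0) =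
    ((Fintype.card F : ℂ) ^ (Module.finrank F Y * Module.finrank F X))⁻¹ *
      ((Fintype.card F : ℂ) ^ Module.finrank F X *
        ∑ W : Submodule F (Fin n → F),
          if W ≤ Y ∧ Module.finrank F W + 1 = Module.finrank F Y ∧ W ≤ X then (1 : ℂ) else 0) := by
  have hq : (Fintype.card F : ℂ) ≠ 0 := Nat.cast_ne_zero.2 Fintype.card_ne_zero
  rw [Finset.mul_sum, Finset.mul_sum]
  refine Finset.sum_congr rfl fun W _ => ?_
  simp only [zetaVec]
  by_cases h : W ≤ Y ∧ Module.finrank F W + 1 = Module.finrank F Y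
  · by_cases hX : W ≤ X
    · rw [if_pos h, if_pos hX, if_pos ⟨h.1, h.2, hX⟩, ← h.2, Nat.succ_mul, pow_add]
      field_simp
    · simp [hX]
  · rw [if_neg h, if_neg (fun h' => h ⟨h'.1, h'.2.1⟩)]
    simp

open Classical in
theorem Mq_mulVec_zetaVec (F : Type) [Field F] [Fintype F] (n : ℕ)
    (Y : Submodule F (Fin n → F)) :
    (Mq F n).mulVec (zetaVec F n Y) = eigVal F n (Module.finrank F Y) • zetaVec F n Y +
      ((Fintype.card F : ℂ) ^ Module.finrank F Y)⁻¹ • ∑ W : Submodule F (Fin n → F),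
        if W ≤ Y ∧ Module.finrank F W + 1 = Module.finrank F Y then zetaVec F n W else 0 := by
  have hq : (Fintype.card F : ℂ) ≠ 0 := Nat.cast_ne_zero.2 Fintype.card_ne_zero
  ext X
  have hsum : (∑ W : Submodule F (Fin n → F),
        if W ≤ Y ∧ Module.finrank F W + 1 = Module.finrank F Y then zetaVec F n W else 0) X =
      ∑ W : Submodule F (Fin n → F),
        if W ≤ Y ∧ Module.finrank F W + 1 = Module.finrank F Y then zetaVec F n W X else 0 := by
    rw [Finset.sum_apply]
    refine Finset.sum_congr rfl fun W _ => ?_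
    split_ifs <;> rfl
  rw [Pi.add_apply, Pi.smul_apply, Pi.smul_apply, hsum, sum_covered_zetaVec,
    Mq_mulVec_zetaVec_apply, sum_covered, sum_covers, sum_covered_within, smul_eq_mul, smul_eq_mul,
    zetaVec]
  by_cases hYX : Y ≤ X
  · simp only [if_pos hYX, eigVal]
    have hXn : Module.finrank F X ≤ n := by simpa using Submodule.finrank_le X
    obtain ⟨a, ha⟩ := Nat.exists_eq_add_of_le (Submodule.finrank_mono hYX)
    obtain ⟨b, hb⟩ := Nat.exists_eq_add_of_le hXn
    generalize Module.finrank F X = x at *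
    generalize Module.finrank F Y = k at *
    subst ha hb
    have h1 : k + a - k = a := by omega
    have h2 : k + a + b - (k + a) = b := by omega
    have h3 : k + a + b - k = a + b := by omega
    rw [h1, h2, h3, qInt_add_cast]
    have hsw : (qInt (Fintype.card F) (k + a) : ℂ) = qInt (Fintype.card F) (a + k) := by
      rw [add_comm]
    rw [qInt_add_cast, qInt_add_cast] at hsw
    rw [pow_add _ k a]
    field_simp
    linear_combination hsw
  · simp only [if_neg hYX]
    ring

/-- The coefficient of `zetaVec F n W`, `dim W = w`, in the eigenvector attached to a
`k`-dimensional subspace containing `W`. -/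
noncomputable def eigCoef (F : Type) [Fintype F] (n k w : ℕ) : ℂ :=
  ∏ j ∈ Finset.Ico w k, -((Fintype.card F : ℂ) ^ (j + 1) *
    ((Fintype.card F : ℂ) ^ (n - k) + (Fintype.card F : ℂ) ^ j))⁻¹

theorem eigCoef_self (F : Type) [Fintype F] (n k : ℕ) : eigCoef F n k k = 1 := by
  simp [eigCoef]

theorem eigCoef_recurrence (F : Type) [Field F] [Fintype F] {n k w : ℕ} (hk : k ≤ n)
    (hw : w ≤ k) :
    eigCoef F n k w * eigVal F n w + eigCoef F n k (w + 1) *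
      ((Fintype.card F : ℂ) ^ (w + 1))⁻¹ * qInt (Fintype.card F) (k - w) =
    eigVal F n k * eigCoef F n k w := by
  rcases hw.eq_or_lt with rfl | hlt
  · simp [qInt, mul_comm]
  · have hq : (Fintype.card F : ℂ) ≠ 0 := Nat.cast_ne_zero.2 Fintype.card_ne_zero
    have hne := card_pow_add_card_pow_ne_zero F (n - k) w
    have hrec : eigCoef F n k w = -((Fintype.card F : ℂ) ^ (w + 1) *
        ((Fintype.card F : ℂ) ^ (n - k) + (Fintype.card F : ℂ) ^ w))⁻¹ *
          eigCoef F n k (w + 1) := by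
      rw [eigCoef, Finset.prod_eq_prod_Ico_succ_bot hlt, eigCoef]
    have hsub : eigVal F n w = eigVal F n k + ((Fintype.card F : ℂ) ^ (n - k) +
        (Fintype.card F : ℂ) ^ w) * qInt (Fintype.card F) (k - w) :=
      eq_add_of_sub_eq' (eigVal_sub F hk hw)
    rw [hsub, hrec]
    field_simp
    ring

open Classical in
/-- The eigenvector of `Mq F n` attached to a subspace `Y`. -/
noncomputable def eigVec (F : Type) [Field F] [Fintype F] (n : ℕ)
    (Y : Submodule F (Fin n → F)) : Submodule F (Fin n → F) → ℂ :=
  ∑ W : Submodule F (Fin n → F),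
    (if W ≤ Y then eigCoef F n (Module.finrank F Y) (Module.finrank F W) else 0) • zetaVec F n W

theorem Mq_mulVec_eigVec (F : Type) [Field F] [Fintype F] (n : ℕ)
    (Y : Submodule F (Fin n → F)) :
    (Mq F n).mulVec (eigVec F n Y) = eigVal F n (Module.finrank F Y) • eigVec F n Y := by
  classical
  have hYn : Module.finrank F Y ≤ n := by simpa using Submodule.finrank_le Y
  set a : Submodule F (Fin n → F) → ℂ := fun W =>
    if W ≤ Y then eigCoef F n (Module.finrank F Y) (Module.finrank F W) else 0 with ha
  have he : eigVec F n Y = ∑ W, a W • zetaVec F n W := by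
    simp only [eigVec, ha]
  have hcoef : ∀ W : Submodule F (Fin n → F),
      a W * eigVal F n (Module.finrank F W) + (∑ Z : Submodule F (Fin n → F),
        if W ≤ Z ∧ Module.finrank F W + 1 = Module.finrank F Z then
          a Z * ((Fintype.card F : ℂ) ^ Module.finrank F Z)⁻¹ else 0) =
      eigVal F n (Module.finrank F Y) * a W := by
    intro W
    have hsum : (∑ Z : Submodule F (Fin n → F),
        if W ≤ Z ∧ Module.finrank F W + 1 = Module.finrank F Z then
          a Z * ((Fintype.card F : ℂ) ^ Module.finrank F Z)⁻¹ else 0) =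
        eigCoef F n (Module.finrank F Y) (Module.finrank F W + 1) *
          ((Fintype.card F : ℂ) ^ (Module.finrank F W + 1))⁻¹ *
          if W ≤ Y then
            (qInt (Fintype.card F) (Module.finrank F Y - Module.finrank F W) : ℂ) else 0 := by
      rw [← sum_covers_within, Finset.mul_sum]
      refine Finset.sum_congr rfl fun Z _ => ?_
      by_cases h : W ≤ Z ∧ Module.finrank F W + 1 = Module.finrank F Z
      · by_cases hZ : Z ≤ Y
        · rw [if_pos h, if_pos ⟨h.1, hZ, h.2.symm⟩, h.2, mul_one]
          simp only [ha, if_pos hZ]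
        · simp [ha, hZ]
      · rw [if_neg h, if_neg fun h' : W ≤ Z ∧ Z ≤ Y ∧
          Module.finrank F Z = Module.finrank F W + 1 => h ⟨h'.1, h'.2.2.symm⟩, mul_zero]
    rw [hsum]
    by_cases hW : W ≤ Y
    · simp only [ha, if_pos hW]
      exact eigCoef_recurrence F hYn (Submodule.finrank_mono hW)
    · simp [ha, hW]
  rw [he, ← Matrix.mulVecLin_apply, map_sum, Finset.smul_sum]
  simp only [map_smul, Matrix.mulVecLin_apply, Mq_mulVec_zetaVec, smul_add, smul_smul,
    Finset.sum_add_distrib, Finset.smul_sum, smul_ite, smul_zero]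
  rw [Finset.sum_comm, ← Finset.sum_add_distrib]
  refine Finset.sum_congr rfl fun W _ => ?_
  rw [← hcoef W, add_smul, Finset.sum_smul]
  simp only [ite_smul, zero_smul]

theorem linearIndependent_zetaVec (F : Type) [Field F] [Fintype F] (n : ℕ) :
    LinearIndependent ℂ (zetaVec F n) := by
  have hq : (Fintype.card F : ℂ) ≠ 0 := Nat.cast_ne_zero.2 Fintype.card_ne_zero
  rw [Fintype.linearIndependent_iff]
  intro a ha Y
  induction Y using WellFoundedLT.induction with
  | ind Y ih =>
    have h := congrFun ha Y
    rw [Finset.sum_apply, Finset.sum_eq_single Y] at h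
    · simpa [zetaVec, hq] using h
    · intro W _ hne
      by_cases hW : W ≤ Y
      · simp [ih W (lt_of_le_of_ne hW hne)]
      · simp [zetaVec, hW]
    · simp

theorem linearIndependent_eigVec (F : Type) [Field F] [Fintype F] (n k : ℕ) :
    LinearIndependent ℂ
      fun Y : {Y : Submodule F (Fin n → F) // Module.finrank F Y = k} => eigVec F n Y := by
  classical
  rw [Fintype.linearIndependent_iff]
  intro b hb W
  simp only [eigVec, Finset.smul_sum, smul_smul] at hb
  rw [Finset.sum_comm] at hb
  simp only [← Finset.sum_smul] at hb
  have h := Fintype.linearIndependent_iff.1 (linearIndependent_zetaVec F n) _ hb W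
  rw [Finset.sum_eq_single W] at h
  · simpa [eigCoef_self] using h
  · intro Y _ hne
    rw [if_neg, mul_zero]
    intro hle
    exact hne (Subtype.ext (Submodule.eq_of_le_of_finrank_eq hle (W.2.trans Y.2.symm)).symm)
  · simp

theorem piDist_mul_Mq (F : Type) [Field F] [Fintype F] (n : ℕ) (X Z : Submodule F (Fin n → F)) :
    piDist F n X * Mq F n X Z = piDist F n Z * Mq F n Z X := by
  have hup : ∀ X Z : Submodule F (Fin n → F), X ≤ Z →
      Module.finrank F X + 1 = Module.finrank F Z →
      piDist F n X * Mq F n X Z = piDist F n Z * Mq F n Z X := by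
    intro X Z hle hdim
    have h1 : ¬ (Z ≤ X ∧ Module.finrank F Z + 1 = Module.finrank F X) := by omega
    simp only [Mq]
    rw [if_neg h1, if_pos ⟨hle, hdim.symm⟩, if_pos ⟨hle, hdim⟩]
    simp only [piDist]
    rw [← hdim, Nat.choose_succ_succ' _ 1, Nat.choose_one_right, pow_add]
    ring
  by_cases h1 : X ≤ Z ∧ Module.finrank F X + 1 = Module.finrank F Z
  · exact hup X Z h1.1 h1.2
  · by_cases h2 : Z ≤ X ∧ Module.finrank F Z + 1 = Module.finrank F X
    · exact (hup Z X h2.1 h2.2).symm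
    · simp only [Mq]
      rw [if_neg h2, if_neg h1, if_neg (fun h => h1 ⟨h.1, h.2.symm⟩),
        if_neg (fun h => h2 ⟨h.1, h.2.symm⟩)]
      simp

theorem conj_Mq (F : Type) [Field F] [Fintype F] (n : ℕ) (X Z : Submodule F (Fin n → F)) :
    (starRingEnd ℂ) (Mq F n X Z) = Mq F n X Z := by
  simp only [Mq]
  split_ifs <;> simp

theorem innerPi_mulVec (F : Type) [Field F] [Fintype F] (n : ℕ)
    (u v : Submodule F (Fin n → F) → ℂ) :
    innerPi F n ((Mq F n).mulVec u) v = innerPi F n u ((Mq F n).mulVec v) := by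
  simp only [innerPi, Matrix.mulVec, dotProduct, map_sum, map_mul, conj_Mq, Finset.sum_mul,
    Finset.mul_sum]
  rw [Finset.sum_comm]
  refine Finset.sum_congr rfl fun X _ => Finset.sum_congr rfl fun Z _ => ?_
  linear_combination (starRingEnd ℂ (u X) * v Z) * piDist_mul_Mq F n Z X

theorem innerPi_eq_zero_of_eigenvectors (F : Type) [Field F] [Fintype F] (n : ℕ) {k w : ℕ}
    {u v : Submodule F (Fin n → F) → ℂ} (hu : (Mq F n).mulVec u = eigVal F n k • u)
    (hv : (Mq F n).mulVec v = eigVal F n w • v) (hne : eigVal F n k ≠ eigVal F n w) :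
    innerPi F n u v = 0 := by
  have h := innerPi_mulVec F n u v
  have hreal : (starRingEnd ℂ) (eigVal F n k) = eigVal F n k := by simp [eigVal]
  have hl : innerPi F n (eigVal F n k • u) v = eigVal F n k * innerPi F n u v := by
    simp only [innerPi, Finset.mul_sum, Pi.smul_apply, smul_eq_mul, map_mul, hreal]
    exact Finset.sum_congr rfl fun X _ => by ring
  have hr : innerPi F n u (eigVal F n w • v) = eigVal F n w * innerPi F n u v := by
    simp only [innerPi, Finset.mul_sum, Pi.smul_apply, smul_eq_mul]
    exact Finset.sum_congr rfl fun X _ => by ring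
  rw [hu, hv, hl, hr, ← sub_eq_zero, ← sub_mul] at h
  exact (mul_eq_zero.1 h).resolve_left (sub_ne_zero.2 hne)

/-- The distribution `piDist` as a real number. -/
noncomputable def piReal (F : Type) [Field F] [Fintype F] (n : ℕ)
    (X : Submodule F (Fin n → F)) : ℝ :=
  (Fintype.card F : ℝ) ^ (Nat.choose (Module.finrank F X) 2) /
    ∏ k ∈ Finset.range n, (1 + (Fintype.card F : ℝ) ^ k)

theorem ofReal_piReal (F : Type) [Field F] [Fintype F] (n : ℕ) (X : Submodule F (Fin n → F)) :
    (piReal F n X : ℂ) = piDist F n X := by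
  simp [piReal, piDist]

theorem piReal_pos (F : Type) [Field F] [Fintype F] (n : ℕ) (X : Submodule F (Fin n → F)) :
    0 < piReal F n X := by
  have : (0 : ℝ) < Fintype.card F := Nat.cast_pos.2 Fintype.card_pos
  exact div_pos (by positivity) (Finset.prod_pos fun k _ => by positivity)

/-- The isometry `u ↦ √π u` from `⟨·,·⟩_π` to the standard inner product. -/
noncomputable def piEquiv (F : Type) [Field F] [Fintype F] (n : ℕ) :
    (Submodule F (Fin n → F) → ℂ) ≃ₗ[ℂ] EuclideanSpace ℂ (Submodule F (Fin n → F)) :=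
  (LinearEquiv.piCongrRight fun X => LinearEquiv.smulOfNeZero ℂ ℂ ((√(piReal F n X) : ℝ) : ℂ)
    (Complex.ofReal_ne_zero.2 (Real.sqrt_pos.2 (piReal_pos F n X)).ne')).trans
    (WithLp.linearEquiv 2 ℂ _).symm

theorem inner_piEquiv (F : Type) [Field F] [Fintype F] (n : ℕ)
    (u v : Submodule F (Fin n → F) → ℂ) :
    inner ℂ (piEquiv F n u) (piEquiv F n v) = innerPi F n u v := by
  rw [PiLp.inner_apply, innerPi]
  refine Finset.sum_congr rfl fun X _ => ?_
  have happ : ∀ u, piEquiv F n u X = ((√(piReal F n X) : ℝ) : ℂ) * u X := fun u => rfl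
  have hsq : ((√(piReal F n X) : ℝ) : ℂ) * ((√(piReal F n X) : ℝ) : ℂ) = piDist F n X := by
    rw [← Complex.ofReal_mul, Real.mul_self_sqrt (piReal_pos F n X).le, ofReal_piReal]
  rw [happ, happ, RCLike.inner_apply, map_mul, Complex.conj_ofReal, ← hsq]
  ring

theorem exists_orthogonal_eigenvectors (F : Type) [Field F] [Fintype F] (n k : ℕ) :
    ∃ u : Fin (gaussBinom F n k) → (Submodule F (Fin n → F) → ℂ),
      (∀ i, (Mq F n).mulVec (u i) = eigVal F n k • u i) ∧
      Orthonormal ℂ fun i => piEquiv F n (u i) := by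
  set S : Submodule ℂ (Submodule F (Fin n → F) → ℂ) := Submodule.span ℂ (Set.range
    fun Y : {Y : Submodule F (Fin n → F) // Module.finrank F Y = k} => eigVec F n Y) with hS
  have hfin : Module.finrank ℂ (S.map (piEquiv F n).toLinearMap) = gaussBinom F n k := by
    rw [LinearEquiv.finrank_map_eq, hS, finrank_span_eq_card (linearIndependent_eigVec F n k),
      gaussBinom, Nat.card_eq_fintype_card]
  have hSeig : S ≤ Module.End.eigenspace (Mq F n).mulVecLin (eigVal F n k) := by
    rw [hS, Submodule.span_le]
    rintro _ ⟨Y, rfl⟩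
    rw [SetLike.mem_coe, Module.End.mem_eigenspace_iff, Matrix.mulVecLin_apply, Mq_mulVec_eigVec,
      Y.2]
  let b := (stdOrthonormalBasis ℂ (S.map (piEquiv F n).toLinearMap)).reindex (finCongr hfin)
  refine ⟨fun i => (piEquiv F n).symm (b i), fun i => ?_, ?_⟩
  · obtain ⟨u, hu, hub⟩ := Submodule.mem_map.1 (b i).2
    have hbu : (piEquiv F n).symm (b i) = u := by
      rw [← hub]
      exact (piEquiv F n).symm_apply_apply u
    beta_reduce
    rw [hbu]
    exact Module.End.mem_eigenspace_iff.1 (hSeig hu)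
  · simp only [LinearEquiv.apply_symm_apply]
    exact b.orthonormal.comp_linearIsometry (S.map (piEquiv F n).toLinearMap).subtypeₗᵢ

theorem card_sigma_gaussBinom (F : Type) [Field F] [Fintype F] (n : ℕ) :
    Fintype.card (Σ k : Fin (n + 1), Fin (gaussBinom F n (k : ℕ))) =
      Fintype.card (Submodule F (Fin n → F)) := by
  classical
  rw [Fintype.card_sigma]
  simp only [Fintype.card_fin, gaussBinom, Nat.card_eq_fintype_card, Fintype.card_subtype]
  rw [← Finset.card_univ, Fin.sum_univ_eq_sum_range
    (fun k => (Finset.univ.filter fun X : Submodule F (Fin n → F) =>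
      Module.finrank F X = k).card), ← Finset.card_eq_sum_card_fiberwise]
  intro X _
  have : Module.finrank F X ≤ n := by simpa using Submodule.finrank_le X
  simpa using Nat.lt_succ_of_le this

/-- There is a basis of `ℂ^(B_q(n))` of eigenvectors of `M_q(n)`, orthogonal for
`⟨·,·⟩_π`, containing exactly `[n choose k]_q` vectors of eigenvalue
`(n−k)_q − (k)_q` for each `k = 0, 1, …, n`. -/
theorem orthogonal_eigenbasis (F : Type) [Field F] [Fintype F] (n : ℕ) :
    ∃ v : (Σ k : Fin (n + 1), Fin (gaussBinom F n (k : ℕ))) →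
        (Submodule F (Fin n → F) → ℂ),
      LinearIndependent ℂ v ∧
      ⊤ ≤ Submodule.span ℂ (Set.range v) ∧
      (∀ p p', p ≠ p' → innerPi F n (v p) (v p') = 0) ∧
      (∀ p, (Mq F n).mulVec (v p) =
        ((qInt (Fintype.card F) (n - (p.1 : ℕ)) : ℂ) -
          (qInt (Fintype.card F) (p.1 : ℕ) : ℂ)) • v p) := by
  choose u hu hon using fun k => exists_orthogonal_eigenvectors F n k
  have hne : ∀ k w : Fin (n + 1), k ≠ w → eigVal F n k ≠ eigVal F n w := by
    intro k w hkw
    rcases lt_or_gt_of_ne hkw with h | h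
    · exact eigVal_ne_of_lt F (Nat.lt_succ_iff.1 w.2) h
    · exact (eigVal_ne_of_lt F (Nat.lt_succ_iff.1 k.2) h).symm
  let v : (Σ k : Fin (n + 1), Fin (gaussBinom F n (k : ℕ))) → (Submodule F (Fin n → F) → ℂ) :=
    fun p => u p.1 p.2
  have horth : ∀ p p', p ≠ p' → innerPi F n (v p) (v p') = 0 := by
    rintro ⟨k, i⟩ ⟨w, j⟩ hp
    by_cases hkw : k = w
    · subst hkw
      have hij : i ≠ j := fun h => hp (by rw [h])
      rw [← inner_piEquiv]
      exact (hon k).2 hij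
    · exact innerPi_eq_zero_of_eigenvectors F n (hu k i) (hu w j) (hne k w hkw)
  have hli : LinearIndependent ℂ v := by
    apply LinearIndependent.of_comp (piEquiv F n).toLinearMap
    refine linearIndependent_of_ne_zero_of_inner_eq_zero (fun p => (hon p.1).ne_zero p.2) ?_
    intro p p' hp
    exact (inner_piEquiv F n _ _).trans (horth p p' hp)
  refine ⟨v, hli, ?_, horth, fun p => hu p.1 p.2⟩
  rw [hli.span_eq_top_of_card_eq_finrank' (by
    rw [Module.finrank_fintype_fun_eq_card, card_sigma_gaussBinom])]
end
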